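/- arXiv:1406.7229 — 4 statements merged into one kernel-verified Lean document; each statement's English description precedes it below -/
import Mathlib

section
/- For every integer m ≥ 2 and every real p > 1 there exists a constant C = C(p,m), independent of N, such that for every integer N ≥ 1 and every f : G → ℂ, ‖M_S^L f‖_{L^p(G)} ≤ C · ‖f‖_{L^p(G)}. -/
open Finset

noncomputable section

/-- Hamming weight on `(ℤ/(m+1)ℤ)^N`. -/
def hw {m N : ℕ} (y : Fin N → ZMod (m + 1)) : ℕ :=
  (Finset.univ.filter fun i => y i ≠ 0).card

/-- `L¹`-normalized indicator of the sphere of radius `r` (zero if `r < 0` or `r > N`). -/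
def sigmaC (m N : ℕ) (r : ℤ) : (Fin N → ZMod (m + 1)) → ℂ := fun x =>
  if (hw x : ℤ) = r then
    ((Finset.univ.filter fun y : Fin N → ZMod (m + 1) => (hw y : ℤ) = r).card : ℂ)⁻¹
  else 0

/-- Convolution on `(ℤ/(m+1)ℤ)^N`. -/
def convC {m N : ℕ} (g f : (Fin N → ZMod (m + 1)) → ℂ) : (Fin N → ZMod (m + 1)) → ℂ :=
  fun x => ∑ y, g y * f (x - y)

/-- The smooth local spherical maximal function
`M_S^L f (x) = max_{0 ≤ L ≤ c_m N} (1/(L+1)) |Σ_{k=0}^L (σ_k * f)(x)|`.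
Note that the integers `L` with `0 ≤ L ≤ c_m·N = m·N/(m+1)` are exactly those with
`L ≤ ⌊m·N/(m+1)⌋ = (m*N)/(m+1)` (natural division). -/
def smoothLocalMax (m N : ℕ) (f : (Fin N → ZMod (m + 1)) → ℂ) (x : Fin N → ZMod (m + 1)) : ℝ :=
  (Finset.range ((m * N) / (m + 1) + 1)).sup' Finset.nonempty_range_add_one fun L =>
    (1 / ((L : ℝ) + 1)) * ‖∑ k ∈ Finset.range (L + 1), convC (sigmaC m N (k : ℤ)) f x‖



theorem aux_garsia {ι : Type*} [Fintype ι] (T : (ι → ℝ) →ₗ[ℝ] (ι → ℝ))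
    (hmono : ∀ f g : ι → ℝ, f ≤ g → T f ≤ T g)
    (hsum : ∀ f : ι → ℝ, ∑ x, T f x = ∑ x, f x) (g : ι → ℝ) (n : ℕ) :
    0 ≤ ∑ x ∈ univ.filter (fun x => ∃ k < n, 0 < ∑ j ∈ range (k+1), (T^j) g x), g x := by
  classical
  let S : ℕ → ι → ℝ := fun k x => ∑ j ∈ range k, (T^j) g x
  have hS : ∀ k, S (k+1) = g + T (S k) := by
    intro k
    have e : S k = ∑ j ∈ range k, (T^j) g := by
      ext x; simp [S]
    rw [e, map_sum]
    ext x
    simp only [S, Pi.add_apply, Finset.sum_apply]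
    rw [sum_range_succ']
    simp [pow_succ', add_comm]
  let M : ι → ℝ := fun x => (range (n+1)).sup' nonempty_range_add_one fun k => S k x
  have hSM : ∀ k ≤ n, S k ≤ M := fun k hk x =>
    Finset.le_sup' (fun k => S k x) (mem_range.2 (by omega))
  have hM0 : ∀ x, 0 ≤ M x := fun x => by
    have := hSM 0 (by omega) x
    simpa [S] using this
  have hTM0 : ∀ x, 0 ≤ T M x := fun x => by
    have := hmono 0 M hM0 x
    simpa using this
  set P := univ.filter (fun x => ∃ k < n, 0 < ∑ j ∈ range (k+1), (T^j) g x) with hP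
  have h1 : ∀ x ∈ P, M x ≤ g x + T M x := by
    intro x hx
    obtain ⟨k, hk, hpos⟩ := (mem_filter.1 hx).2
    have key : ∀ k < n, S (k+1) x ≤ g x + T M x := by
      intro k hk
      rw [hS]
      have := hmono _ _ (hSM k (by omega)) x
      simpa using this
    apply Finset.sup'_le
    intro j hj
    rcases j with _ | j
    · have := key k hk
      have h2 : 0 < S (k+1) x := hpos
      have h3 : S 0 x = 0 := by simp [S]
      linarith
    · exact key j (by simp at hj; omega)
  have h2 : ∀ x, x ∉ P → M x = 0 := by
    intro x hx
    apply le_antisymm _ (hM0 x)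
    apply Finset.sup'_le
    intro j hj
    rcases j with _ | j
    · simp [S]
    · by_contra hc
      exact hx (mem_filter.2 ⟨mem_univ _, j, by simp at hj; omega, not_le.1 hc⟩)
  have h3 : ∑ x ∈ P, M x = ∑ x, M x :=
    Finset.sum_subset (subset_univ _) (fun x _ hx => h2 x hx)
  have h4 : ∑ x ∈ P, T M x ≤ ∑ x, T M x :=
    Finset.sum_le_sum_of_subset_of_nonneg (subset_univ _) (fun x _ _ => hTM0 x)
  have h5 := Finset.sum_le_sum h1
  rw [sum_add_distrib] at h5
  rw [hsum] at h4
  linarith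

theorem aux_int (a c p : ℝ) (ha : 0 ≤ a) (hp : 1 < p) :
    MeasureTheory.Integrable ((Set.Ioo 0 a).indicator (fun t : ℝ => c * t^(p-2) - t^(p-1))) ∧
    ∫ t, (Set.Ioo 0 a).indicator (fun t : ℝ => c * t^(p-2) - t^(p-1)) t
      = c * (a^(p-1)/(p-1)) - a^p/p := by
  have i1 : IntervalIntegrable (fun t : ℝ => c * t^(p-2)) MeasureTheory.volume 0 a :=
    (intervalIntegral.intervalIntegrable_rpow' (by linarith)).const_mul c
  have i2 : IntervalIntegrable (fun t : ℝ => t^(p-1)) MeasureTheory.volume 0 a :=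
    intervalIntegral.intervalIntegrable_rpow' (by linarith)
  constructor
  · rw [MeasureTheory.integrable_indicator_iff measurableSet_Ioo]
    have := (i1.sub i2)
    rw [intervalIntegrable_iff_integrableOn_Ioo_of_le ha] at this
    exact this
  · rw [MeasureTheory.integral_indicator measurableSet_Ioo, ← MeasureTheory.integral_Ioc_eq_integral_Ioo,
      ← intervalIntegral.integral_of_le ha, intervalIntegral.integral_sub i1 i2,
      intervalIntegral.integral_const_mul, integral_rpow (Or.inl (by linarith)),
      integral_rpow (Or.inl (by linarith))]
    have e1 : p - 2 + 1 = p - 1 := by ring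
    have e2 : p - 1 + 1 = p := by ring
    rw [e1, e2, Real.zero_rpow (by linarith), Real.zero_rpow (by linarith)]
    simp

theorem aux_doob {ι : Type*} [Fintype ι] (f F : ι → ℝ) (hf : ∀ x, 0 ≤ f x) (hF : ∀ x, 0 ≤ F x)
    (p : ℝ) (hp : 1 < p)
    (h : ∀ t : ℝ, 0 < t → 0 ≤ ∑ x ∈ univ.filter (fun x => t < F x), (f x - t)) :
    (∑ x, F x ^ p) ^ (1/p) ≤ p / (p-1) * (∑ x, f x ^ p) ^ (1/p) := by
  have h1 : 0 ≤ ∑ x, (f x * (F x^(p-1)/(p-1)) - F x^p/p) := by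
    rw [← Finset.sum_congr rfl (fun x _ => (aux_int (F x) (f x) p (hF x) hp).2),
      ← MeasureTheory.integral_finsetSum _ (fun x _ => (aux_int (F x) (f x) p (hF x) hp).1)]
    apply MeasureTheory.integral_nonneg
    intro t
    simp only [Pi.zero_apply]
    rcases le_or_gt t 0 with ht | ht
    · apply le_of_eq; symm
      apply Finset.sum_eq_zero
      intro x _
      apply Set.indicator_of_notMem
      simp [ht.not_gt]
    · have e : ∑ x, (Set.Ioo 0 (F x)).indicator (fun t : ℝ => f x * t^(p-2) - t^(p-1)) t
        = t^(p-2) * ∑ x ∈ univ.filter (fun x => t < F x), (f x - t) := by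
        rw [Finset.sum_filter, Finset.mul_sum]
        apply Finset.sum_congr rfl
        intro x _
        have : t^(p-1) = t^(p-2) * t := by
          rw [← Real.rpow_add_one ht.ne']; congr 1; ring
        simp only [Set.indicator, Set.mem_Ioo, ht, true_and, this]
        split_ifs <;> ring
      rw [e]
      exact mul_nonneg (Real.rpow_nonneg ht.le _) (h t ht)
  have hp1 : 0 < p - 1 := by linarith
  have hp0 : 0 < p := by linarith
  have h2 : ∑ x, F x ^ p ≤ p/(p-1) * ∑ x, f x * F x^(p-1) := by
    rw [sum_sub_distrib, ← Finset.sum_div, Finset.sum_congr rfl (fun x _ => (mul_div_assoc (f x) (F x^(p-1)) (p-1)).symm), ← Finset.sum_div] at h1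
    have := mul_nonneg hp0.le h1
    rw [mul_sub, mul_div_cancel₀ _ hp0.ne'] at this
    calc _ ≤ p * ((∑ x, f x * F x^(p-1)) / (p-1)) := by linarith
      _ = _ := by ring
  have hpq : p.HolderConjugate (p/(p-1)) := Real.HolderConjugate.conjExponent hp
  have h3 := Real.inner_le_Lp_mul_Lq_of_nonneg univ hpq (fun x _ => hf x) (fun x _ => Real.rpow_nonneg (hF x) (p-1))
  have e : ∀ x, (F x^(p-1))^(p/(p-1)) = F x^p := fun x => by
    rw [← Real.rpow_mul (hF x), mul_div_cancel₀ _ hp1.ne']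
  simp only [e] at h3
  set A := ∑ x, F x ^ p with hA
  set B := (∑ x, f x ^ p)^(1/p) with hB
  have hA0 : 0 ≤ A := Finset.sum_nonneg fun x _ => Real.rpow_nonneg (hF x) _
  have hB0 : 0 ≤ B := Real.rpow_nonneg (Finset.sum_nonneg fun x _ => Real.rpow_nonneg (hf x) _) _
  rcases hA0.eq_or_lt with h0 | h0
  · rw [← h0, Real.zero_rpow (by positivity)]
    positivity
  · have h4 : A ≤ p/(p-1) * (B * A^(1/(p/(p-1)))) :=
      h2.trans (mul_le_mul_of_nonneg_left h3 (by positivity))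
    have h5 : A = A^(1/p) * A^(1/(p/(p-1))) := by
      rw [← Real.rpow_add h0]
      have : 1/p + 1/(p/(p-1)) = 1 := by field_simp; ring
      rw [this, Real.rpow_one]
    have h6 : 0 < A^(1/(p/(p-1))) := Real.rpow_pos_of_pos h0 _
    apply le_of_mul_le_mul_right _ h6
    rw [← h5]; linarith

def aF {ι : Type*} (T : (ι → ℝ) →ₗ[ℝ] (ι → ℝ)) (f : ι → ℝ) (n : ℕ) (x : ι) : ℝ :=
  (range (n+1)).sup' nonempty_range_add_one fun k => (1/((k:ℝ)+1)) * ∑ j ∈ range (k+1), (T^j) f x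

theorem aux_maxerg {ι : Type*} [Fintype ι] (T : (ι → ℝ) →ₗ[ℝ] (ι → ℝ))
    (hmono : ∀ f g : ι → ℝ, f ≤ g → T f ≤ T g) (hone : T (fun _ => 1) = fun _ => 1)
    (hsum : ∀ f : ι → ℝ, ∑ x, T f x = ∑ x, f x) (f : ι → ℝ) (hf : ∀ x, 0 ≤ f x) (n : ℕ)
    (p : ℝ) (hp : 1 < p) :
    (∀ x, 0 ≤ aF T f n x) ∧
    (∑ x, aF T f n x ^ p) ^ (1/p) ≤ p / (p-1) * (∑ x, f x ^ p) ^ (1/p) := by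
  have h0 : ∀ x, 0 ≤ aF T f n x := by
    intro x
    refine (hf x).trans ?_
    have := Finset.le_sup' (fun k : ℕ => (1/((k:ℝ)+1)) * ∑ j ∈ range (k+1), (T^j) f x)
      (mem_range.2 (Nat.succ_pos n))
    have e : (1/(((0:ℕ):ℝ)+1)) * ∑ j ∈ range (0+1), (T^j) f x = f x := by simp
    exact e.symm.le.trans this
  refine ⟨h0, aux_doob f _ hf h0 p hp ?_⟩
  intro t ht
  have := aux_garsia T hmono hsum (f - t • (fun _ => 1)) (n+1)
  have hT : ∀ j, (T^j) (fun _ => (1:ℝ)) = fun _ => 1 := by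
    intro j
    induction j with
    | zero => simp
    | succ j ih => rw [pow_succ, Module.End.mul_apply, hone, ih]
  convert this using 1
  have hset : (univ.filter fun x => t < aF T f n x) = univ.filter (fun x => ∃ k < n+1, 0 < ∑ j ∈ range (k+1), (T^j) (f - t • (fun _ => 1)) x) := by
    apply Finset.filter_congr
    intro x _
    simp only [aF, Finset.lt_sup'_iff, mem_range, map_sub, map_smul, hT, Pi.sub_apply, Pi.smul_apply, smul_eq_mul, mul_one, sum_sub_distrib, sum_const, card_range, nsmul_eq_mul, sub_pos]
    refine exists_congr fun k => and_congr_right fun _ => ?_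
    have : (0:ℝ) < k + 1 := by positivity
    rw [one_div, inv_mul_eq_div, lt_div_iff₀ this]
    push_cast
    rw [mul_comm]
  rw [hset]
  simp

theorem hw_eq_sum {m N : ℕ} (x : Fin N → ZMod (m + 1)) : hw x = ∑ i, if x i ≠ 0 then 1 else 0 := by
  simp [hw, Finset.card_filter]

theorem hw_sub_single {m N : ℕ} (x : Fin N → ZMod (m + 1)) (i : Fin N) (a : ZMod (m+1)) :
    hw (x - Pi.single i a) + (if x i ≠ 0 then 1 else 0) = hw x + (if x i ≠ a then 1 else 0) := by
  rw [hw_eq_sum, hw_eq_sum, ← Finset.sum_erase_add _ _ (mem_univ i),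
    ← Finset.sum_erase_add univ (fun j => if x j ≠ 0 then 1 else 0) (mem_univ i)]
  have : ∑ j ∈ univ.erase i, (if (x - Pi.single i a : Fin N → ZMod (m+1)) j ≠ 0 then 1 else 0)
      = ∑ j ∈ univ.erase i, (if x j ≠ 0 then 1 else 0) := by
    apply Finset.sum_congr rfl
    intro j hj
    simp [Pi.single_eq_of_ne (ne_of_mem_erase hj)]
  rw [this]
  simp only [Pi.sub_apply, Pi.single_eq_same, sub_ne_zero]
  ring

theorem nbr_sum_one {m N : ℕ} (x : Fin N → ZMod (m + 1)) (i : Fin N) (F : ℕ → ℝ) :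
    ∑ a ∈ univ.erase (0 : ZMod (m+1)), F (hw (x - Pi.single i a))
      = if x i = 0 then m * F (hw x + 1) else F (hw x - 1) + ((m:ℝ) - 1) * F (hw x) := by
  classical
  have hcard : (univ.erase (0 : ZMod (m+1))).card = m := by
    rw [card_erase_of_mem (mem_univ _), card_univ, ZMod.card]; rfl
  split_ifs with h
  · rw [Finset.sum_congr rfl (g := fun _ => F (hw x + 1))]
    · rw [sum_const, hcard, nsmul_eq_mul]
    · intro a ha
      have := hw_sub_single x i a
      have hne : (0:ZMod (m+1)) ≠ a := (ne_of_mem_erase ha).symm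
      simp only [h, ne_eq, not_true_eq_false, if_false, hne, not_false_eq_true, if_true, add_zero] at this
      rw [this]
  · have hmem : x i ∈ univ.erase (0 : ZMod (m+1)) := mem_erase.2 ⟨h, mem_univ _⟩
    rw [← Finset.sum_erase_add _ _ hmem, Finset.sum_congr rfl (g := fun _ => F (hw x))]
    · have h1 := hw_sub_single x i (x i)
      simp only [h, ne_eq, not_true_eq_false, if_false, not_false_eq_true, if_true, add_zero] at h1
      have h2 : hw (x - Pi.single i (x i)) = hw x - 1 := by omega
      have hm1 : 1 ≤ m := by rw [← hcard]; exact card_pos.2 ⟨_, hmem⟩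
      rw [sum_const, card_erase_of_mem hmem, hcard, nsmul_eq_mul, h2, Nat.cast_sub hm1]
      push_cast; ring
    · intro a ha
      have := hw_sub_single x i a
      have hne : x i ≠ a := (ne_of_mem_erase ha).symm
      simp only [h, ne_eq, not_false_eq_true, if_true, hne] at this
      have h3 : hw (x - Pi.single i a) = hw x := by omega
      rw [h3]

theorem nbr_sum {m N : ℕ} (x : Fin N → ZMod (m + 1)) (F : ℕ → ℝ) :
    ∑ i, ∑ a ∈ univ.erase (0 : ZMod (m+1)), F (hw (x - Pi.single i a))
      = ((N:ℝ) - hw x) * (m * F (hw x + 1)) + hw x * (F (hw x - 1) + ((m:ℝ) - 1) * F (hw x)) := by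
  simp only [nbr_sum_one]
  rw [Finset.sum_ite, sum_const, sum_const, nsmul_eq_mul, nsmul_eq_mul]
  have h1 := Finset.card_filter_add_card_filter_not (s := (univ : Finset (Fin N))) (fun i => x i = 0)
  have h2 : (univ.filter fun i => ¬ x i = 0).card = hw x := rfl
  rw [h2] at h1 ⊢
  rw [card_univ, Fintype.card_fin] at h1
  have h3 : ((univ.filter fun i => x i = 0).card : ℝ) = N - hw x := by
    have h4 : (((univ.filter fun i => x i = 0).card + hw x : ℕ) : ℝ) = N := by exact_mod_cast h1
    push_cast at h4; linarith
  rw [h3]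

theorem hw_le {m N : ℕ} (x : Fin N → ZMod (m + 1)) : hw x ≤ N := by
  have := card_le_univ (univ.filter fun i => x i ≠ 0)
  simpa [hw] using this

/-- one step of the random walk -/
def TT (m N : ℕ) : ((Fin N → ZMod (m + 1)) → ℝ) →ₗ[ℝ] ((Fin N → ZMod (m + 1)) → ℝ) where
  toFun h := fun x => ((N:ℝ) * m)⁻¹ * ∑ i, ∑ a ∈ univ.erase (0 : ZMod (m+1)), h (x - Pi.single i a)
  map_add' f g := by
    ext x; simp [sum_add_distrib, mul_add]
  map_smul' c f := by
    ext x
    simp only [Pi.smul_apply, smul_eq_mul, ← Finset.mul_sum, RingHom.id_apply]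
    ring

theorem TT_apply (m N : ℕ) (h : (Fin N → ZMod (m + 1)) → ℝ) (x) :
    TT m N h x = ((N:ℝ) * m)⁻¹ * ∑ i, ∑ a ∈ univ.erase (0 : ZMod (m+1)), h (x - Pi.single i a) := rfl

theorem TT_mono (m N : ℕ) (f g : (Fin N → ZMod (m + 1)) → ℝ) (h : f ≤ g) : TT m N f ≤ TT m N g := by
  intro x
  rw [TT_apply, TT_apply]
  apply mul_le_mul_of_nonneg_left _ (by positivity)
  exact Finset.sum_le_sum fun i _ => Finset.sum_le_sum fun a _ => h _

theorem TT_const_sum (m N : ℕ) (hm : 2 ≤ m) (hN : 1 ≤ N) (c : ℝ) :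
    ((N:ℝ) * m)⁻¹ * ∑ _i : Fin N, ∑ _a ∈ univ.erase (0 : ZMod (m+1)), c = c := by
  have hcard : (univ.erase (0 : ZMod (m+1))).card = m := by
    rw [card_erase_of_mem (mem_univ _), card_univ, ZMod.card]; rfl
  have : (N:ℝ) ≠ 0 := by positivity
  have : (m:ℝ) ≠ 0 := by positivity
  simp only [sum_const, hcard, card_univ, Fintype.card_fin, nsmul_eq_mul]
  field_simp

theorem TT_one (m N : ℕ) (hm : 2 ≤ m) (hN : 1 ≤ N) : TT m N (fun _ => 1) = fun _ => 1 := by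
  ext x
  rw [TT_apply, TT_const_sum m N hm hN]

theorem neg_sum_aux {m : ℕ} (φ : ZMod (m+1) → ℝ) :
    ∑ a ∈ univ.erase (0 : ZMod (m+1)), φ a = ∑ a ∈ univ.erase (0 : ZMod (m+1)), φ (-a) := by
  refine Finset.sum_nbij' (fun a => -a) (fun a => -a) ?_ ?_ ?_ ?_ ?_ <;> simp

/-- duality -/
theorem TT_dual (m N : ℕ) (h w : (Fin N → ZMod (m + 1)) → ℝ) :
    ∑ x, TT m N h x * w x
      = ∑ z, h z * (((N:ℝ) * m)⁻¹ * ∑ i, ∑ a ∈ univ.erase (0 : ZMod (m+1)), w (z - Pi.single i a)) := by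
  conv_rhs =>
    enter [2, z, 2, 2, 2, i]
    rw [neg_sum_aux]
  simp only [TT_apply, Finset.mul_sum, Finset.sum_mul]
  rw [Finset.sum_comm]
  conv_rhs => rw [Finset.sum_comm]
  apply Finset.sum_congr rfl; intro i _
  rw [Finset.sum_comm]
  conv_rhs => rw [Finset.sum_comm]
  apply Finset.sum_congr rfl; intro a _
  rw [← Equiv.sum_comp (Equiv.addRight (Pi.single i a : Fin N → ZMod (m+1)))]
  apply Finset.sum_congr rfl; intro x _
  simp only [Equiv.coe_addRight, add_sub_cancel_right, Pi.single_neg, sub_neg_eq_add]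
  ring

theorem TT_sum (m N : ℕ) (hm : 2 ≤ m) (hN : 1 ≤ N) (h : (Fin N → ZMod (m + 1)) → ℝ) :
    ∑ x, TT m N h x = ∑ x, h x := by
  have := TT_dual m N h (fun _ => 1)
  simpa only [TT_const_sum m N hm hN, mul_one] using this

def mu (m N : ℕ) (n : ℕ) : (Fin N → ZMod (m + 1)) → ℝ :=
  (TT m N ^ n) (fun x => if x = 0 then 1 else 0)

theorem mu_succ (m N n : ℕ) : mu m N (n+1) = TT m N (mu m N n) := by
  simp [mu, pow_succ']

theorem mu_nonneg (m N n : ℕ) (x) : 0 ≤ mu m N n x := by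
  induction n generalizing x with
  | zero => simp only [mu, pow_zero, Module.End.one_apply]; split_ifs <;> norm_num
  | succ n ih =>
    rw [mu_succ]
    have := TT_mono m N 0 _ ih x
    simpa using this

theorem mu_conv (m N n : ℕ) (f : (Fin N → ZMod (m + 1)) → ℝ) (x) :
    (TT m N ^ n) f x = ∑ y, mu m N n y * f (x - y) := by
  induction n generalizing x with
  | zero => simp [mu]
  | succ n ih =>
    rw [pow_succ', Module.End.mul_apply, mu_succ, TT_dual, TT_apply]
    conv_rhs =>
      enter [2, z, 2, 2, 2, i]
      rw [neg_sum_aux]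
    simp only [ih, Finset.mul_sum]
    conv_rhs => rw [Finset.sum_comm]
    apply Finset.sum_congr rfl; intro i _
    conv_rhs => rw [Finset.sum_comm]
    apply Finset.sum_congr rfl; intro a _
    apply Finset.sum_congr rfl; intro y _
    have : x - (y - Pi.single i (-a)) = x - Pi.single i a - y := by
      rw [Pi.single_neg]; abel
    rw [this]
    ring

theorem mu_radial (m N n : ℕ) : ∃ h : ℕ → ℝ, ∀ x, mu m N n x = h (hw x) := by
  induction n with
  | zero =>
    refine ⟨fun r => if r = 0 then 1 else 0, fun x => ?_⟩
    have : hw x = 0 ↔ x = 0 := by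
      simp [hw, Finset.filter_eq_empty_iff, funext_iff]
    simp [mu, this]
  | succ n ih =>
    obtain ⟨h, hh⟩ := ih
    refine ⟨fun r => ((N:ℝ) * m)⁻¹ * (((N:ℝ) - r) * (m * h (r + 1)) + r * (h (r - 1) + ((m:ℝ) - 1) * h r)), fun x => ?_⟩
    rw [mu_succ, TT_apply]
    simp only [hh, nbr_sum]

theorem mu_mass (m N n : ℕ) (hm : 2 ≤ m) (hN : 1 ≤ N) : ∑ x, mu m N n x = 1 := by
  induction n with
  | zero => simp [mu]
  | succ n ih => rw [mu_succ, TT_sum m N hm hN, ih]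

theorem hw_single_bounds {m N : ℕ} (x : Fin N → ZMod (m + 1)) (i : Fin N) (a : ZMod (m+1)) :
    hw (x - Pi.single i a) ≤ hw x + 1 ∧ hw x ≤ hw (x - Pi.single i a) + 1 := by
  have := hw_sub_single x i a
  split_ifs at this <;> omega

theorem mu_supp (m N n : ℕ) (x) (hx : n < hw x) : mu m N n x = 0 := by
  induction n generalizing x with
  | zero =>
    have : x ≠ 0 := by rintro rfl; simp [hw] at hx
    simp [mu, this]
  | succ n ih =>
    rw [mu_succ, TT_apply, Finset.sum_eq_zero, mul_zero]
    intro i _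
    apply Finset.sum_eq_zero
    intro a _
    apply ih
    have := (hw_single_bounds x i a).2
    omega

/-- mean recursion -/
theorem mu_mean_succ (m N n : ℕ) (hm : 2 ≤ m) (hN : 1 ≤ N) :
    ∑ x, mu m N (n+1) x * hw x
      = (∑ x, mu m N n x * hw x) * (1 - ((m:ℝ)+1)/(m*N)) + 1 := by
  have hmass := mu_mass m N n hm hN
  rw [mu_succ, TT_dual m N (mu m N n) (fun x => (hw x : ℝ)), Finset.sum_mul]
  conv_rhs => arg 2; rw [← hmass]
  rw [← sum_add_distrib]
  apply Finset.sum_congr rfl; intro z _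
  rw [nbr_sum z (fun r => (r:ℝ))]
  have : (N:ℝ) ≠ 0 := by positivity
  have : (m:ℝ) ≠ 0 := by positivity
  rcases Nat.eq_zero_or_pos (hw z) with h | h
  · rw [h]; push_cast; field_simp; ring
  · rw [Nat.cast_sub h]; push_cast; field_simp; ring

theorem mu_mean_le (m N n : ℕ) (hm : 2 ≤ m) (hN : 1 ≤ N) :
    ∑ x, mu m N n x * hw x ≤ n := by
  calc _ ≤ ∑ x, mu m N n x * n := by
        apply Finset.sum_le_sum; intro x _
        rcases le_or_gt (hw x) n with h | h
        · exact mul_le_mul_of_nonneg_left (by exact_mod_cast h) (mu_nonneg _ _ _ _)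
        · simp [mu_supp m N n x h]
    _ = n := by rw [← Finset.sum_mul, mu_mass m N n hm hN, one_mul]

theorem mu_mean_ge (m N n : ℕ) (hm : 2 ≤ m) (hN : 1 ≤ N) :
    (n:ℝ) - n^2/2 * (((m:ℝ)+1)/(m*N)) ≤ ∑ x, mu m N n x * hw x := by
  induction n with
  | zero =>
    simp only [CharP.cast_eq_zero]
    have : 0 ≤ ∑ x, mu m N 0 x * (hw x : ℝ) := Finset.sum_nonneg fun x _ => mul_nonneg (mu_nonneg _ _ _ _) (by positivity)
    simpa using this
  | succ n ih =>
    rw [mu_mean_succ m N n hm hN]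
    have h1 := mu_mean_le m N n hm hN
    have h2 : 0 ≤ ((m:ℝ)+1)/(m*N) := by positivity
    set κ := ((m:ℝ)+1)/(m*N)
    push_cast
    nlinarith [mul_le_mul_of_nonneg_right h1 h2]

def tail (m N n k : ℕ) : ℝ := ∑ x, mu m N n x * (if k < hw x then 1 else 0)
def occ (m N n k : ℕ) : ℝ := ∑ x, mu m N n x * (if hw x = k then 1 else 0)

theorem tail_succ (m N n k : ℕ) (hm : 2 ≤ m) (hN : 1 ≤ N) :
    tail m N (n+1) k ≤ tail m N n k + occ m N n k := by
  unfold tail occ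
  rw [mu_succ, TT_dual m N _ (fun x => if k < hw x then (1:ℝ) else 0), ← sum_add_distrib]
  apply Finset.sum_le_sum; intro z _
  rw [← mul_add]
  apply mul_le_mul_of_nonneg_left _ (mu_nonneg _ _ _ _)
  rw [← TT_const_sum m N hm hN ((if k < hw z then (1:ℝ) else 0) + (if hw z = k then 1 else 0))]
  apply mul_le_mul_of_nonneg_left _ (by positivity)
  apply Finset.sum_le_sum; intro i _
  apply Finset.sum_le_sum; intro a _
  have := (hw_single_bounds z i a).1
  split_ifs <;> first | omega | norm_num

theorem tail_le_occ (m N n k : ℕ) (hm : 2 ≤ m) (hN : 1 ≤ N) :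
    tail m N n k ≤ ∑ j ∈ range n, occ m N j k := by
  induction n with
  | zero =>
    simp only [range_zero, sum_empty]
    apply Finset.sum_nonpos
    intro x _
    split_ifs with h
    · rw [mu_supp m N 0 x (by omega)]; simp
    · simp
  | succ n ih =>
    rw [sum_range_succ]
    linarith [tail_succ m N n k hm hN]

theorem tail_anti (m N n k L : ℕ) (h : k ≤ L) : tail m N n L ≤ tail m N n k := by
  apply Finset.sum_le_sum; intro x _
  apply mul_le_mul_of_nonneg_left _ (mu_nonneg _ _ _ _)
  split_ifs <;> first | omega | norm_num

theorem tail_ge (m N L : ℕ) (hm : 2 ≤ m) (hN : 1 ≤ N)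
    (hL : 4 * ((L:ℝ)+1) * (((m:ℝ)+1)/(m*N)) ≤ 1) : 1/4 ≤ tail m N (4*(L+1)) L := by
  have h1 := mu_mean_ge m N (4*(L+1)) hm hN
  have h2 : ∑ x, mu m N (4*(L+1)) x * hw x ≤ L + (4*((L:ℝ)+1)) * tail m N (4*(L+1)) L := by
    have hL' : (L:ℝ) = ∑ x, mu m N (4*(L+1)) x * L := by
      rw [← Finset.sum_mul, mu_mass m N _ hm hN, one_mul]
    rw [tail, Finset.mul_sum]
    conv_rhs => rw [hL']
    conv_rhs => arg 2; rw [← hL']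
    rw [← sum_add_distrib]
    apply Finset.sum_le_sum; intro x _
    have h0 := mu_nonneg m N (4*(L+1)) x
    rcases le_or_gt (hw x) L with h | h
    · have : (hw x : ℝ) ≤ L := by exact_mod_cast h
      simp only [h.not_gt, if_false, mul_zero, add_zero]
      exact mul_le_mul_of_nonneg_left this h0
    · simp only [h, if_true, mul_one]
      rcases le_or_gt (hw x) (4*(L+1)) with h' | h'
      · have : (hw x : ℝ) ≤ 4*(L+1) := by exact_mod_cast h'
        nlinarith [mul_le_mul_of_nonneg_left this h0, mul_nonneg h0 (Nat.cast_nonneg (α := ℝ) L)]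
      · rw [mu_supp m N _ x h']; simp
  have h3 : 0 ≤ ((m:ℝ)+1)/(m*N) := by positivity
  set κ := ((m:ℝ)+1)/(m*N)
  set t := tail m N (4*(L+1)) L
  push_cast at h1
  have hLp : (0:ℝ) < L + 1 := by positivity
  have h4 : (4 * ((L:ℝ)+1))^2/2*κ ≤ 2*((L:ℝ)+1) := by
    nlinarith [mul_le_mul_of_nonneg_left hL hLp.le]
  have h5 : ((L:ℝ)+1) * 1 ≤ (L+1) * (4*t) := by linarith
  have := le_of_mul_le_mul_left h5 hLp
  linarith

def sph (m N k : ℕ) : ℕ := (univ.filter fun y : Fin N → ZMod (m + 1) => hw y = k).card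

theorem occ_eq (m N n : ℕ) (y : Fin N → ZMod (m + 1)) :
    occ m N n (hw y) = sph m N (hw y) * mu m N n y := by
  obtain ⟨h, hh⟩ := mu_radial m N n
  unfold occ sph
  simp only [hh, mul_ite, mul_one, mul_zero]
  rw [← Finset.sum_filter, Finset.sum_congr rfl (g := fun _ => h (hw y)), sum_const, nsmul_eq_mul]
  intro x hx
  rw [(mem_filter.1 hx).2]

theorem sph_pos (m N : ℕ) (y : Fin N → ZMod (m + 1)) : 0 < sph m N (hw y) :=
  card_pos.2 ⟨y, by simp⟩

/-- real sphere measure -/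
def sg (m N k : ℕ) (y : Fin N → ZMod (m + 1)) : ℝ := if hw y = k then ((sph m N k : ℕ) : ℝ)⁻¹ else 0

theorem sg_nonneg (m N k : ℕ) (y) : 0 ≤ sg m N k y := by
  unfold sg; split_ifs <;> positivity

theorem sg_sum_le (m N k : ℕ) : ∑ y, sg m N k y ≤ 1 := by
  unfold sg
  rw [← Finset.sum_filter, sum_const, nsmul_eq_mul]
  exact mul_inv_le_one

theorem sg_le_mu (m N L : ℕ) (hm : 2 ≤ m) (hN : 1 ≤ N)
    (hL : 4 * ((L:ℝ)+1) * (((m:ℝ)+1)/(m*N)) ≤ 1) (y : Fin N → ZMod (m + 1)) :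
    ∑ k ∈ range (L+1), sg m N k y ≤ 4 * ∑ j ∈ range (4*(L+1)), mu m N j y := by
  have h0 : 0 ≤ ∑ j ∈ range (4*(L+1)), mu m N j y := Finset.sum_nonneg fun j _ => mu_nonneg _ _ _ _
  unfold sg
  rw [Finset.sum_ite_eq]
  split_ifs with h
  · have h1 := tail_le_occ m N (4*(L+1)) (hw y) hm hN
    have h2 := tail_anti m N (4*(L+1)) (hw y) L (by simp at h; omega)
    have h3 := tail_ge m N L hm hN hL
    simp only [occ_eq, ← Finset.mul_sum] at h1
    have hp : (0:ℝ) < sph m N (hw y) := by exact_mod_cast sph_pos m N y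
    rw [inv_le_iff_one_le_mul₀ hp]
    linarith
  · linarith

theorem norm_convC_sum (m N L : ℕ) (f : (Fin N → ZMod (m + 1)) → ℂ) (x) :
    ‖∑ k ∈ range (L+1), convC (sigmaC m N (k:ℤ)) f x‖
      ≤ ∑ y, (∑ k ∈ range (L+1), sg m N k y) * ‖f (x - y)‖ := by
  simp only [Finset.sum_mul]
  rw [Finset.sum_comm]
  refine (norm_sum_le _ _).trans (Finset.sum_le_sum fun k _ => ?_)
  refine (norm_sum_le _ _).trans (Finset.sum_le_sum fun y _ => ?_)
  rw [norm_mul]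
  apply le_of_eq
  congr 1
  simp only [sigmaC, sg, sph, Nat.cast_inj]
  split_ifs <;> simp

theorem aux_young {G : Type*} [Fintype G] [AddCommGroup G] (w g : G → ℝ) (hw : ∀ y, 0 ≤ w y) (hg : ∀ y, 0 ≤ g y)
    (hs : ∑ y, w y ≤ 1) (p : ℝ) (hp : 1 < p) :
    (∑ x, (∑ y, w y * g (x - y))^p)^(1/p) ≤ (∑ x, g x ^ p)^(1/p) := by
  have hp0 : 0 < p := by linarith
  apply Real.rpow_le_rpow
    (Finset.sum_nonneg fun x _ => Real.rpow_nonneg (Finset.sum_nonneg fun y _ => mul_nonneg (hw y) (hg _)) _) _ (by positivity)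
  calc ∑ x, (∑ y, w y * g (x - y))^p ≤ ∑ x, ∑ y, w y * g (x-y)^p := by
        apply Finset.sum_le_sum; intro x _
        have h1 := Real.inner_le_weight_mul_Lp_of_nonneg univ hp.le w (fun y => g (x-y)) hw (fun y => hg _)
        have h2 : (∑ y, w y)^(1 - p⁻¹) ≤ 1 :=
          Real.rpow_le_one (Finset.sum_nonneg fun y _ => hw y) hs (by
            have := inv_le_one_of_one_le₀ hp.le; linarith)
        have hA : 0 ≤ ∑ y, w y * g (x-y)^p := Finset.sum_nonneg fun y _ => mul_nonneg (hw y) (Real.rpow_nonneg (hg _) _)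
        have h3 : ∑ y, w y * g (x-y) ≤ (∑ y, w y * g (x-y)^p)^(p⁻¹) :=
          h1.trans (mul_le_of_le_one_left (Real.rpow_nonneg hA _) h2)
        calc _ ≤ ((∑ y, w y * g (x-y)^p)^(p⁻¹))^p := Real.rpow_le_rpow (Finset.sum_nonneg fun y _ => mul_nonneg (hw y) (hg _)) h3 hp0.le
          _ = _ := by rw [← Real.rpow_mul hA, inv_mul_cancel₀ hp0.ne', Real.rpow_one]
    _ = ∑ y, w y * ∑ x, g (x-y)^p := by
        rw [Finset.sum_comm]; simp only [Finset.mul_sum]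
    _ = (∑ y, w y) * ∑ x, g x^p := by
        rw [Finset.sum_mul]
        apply Finset.sum_congr rfl; intro y _
        congr 1
        exact Equiv.sum_comp (Equiv.subRight y) (fun x => g x^p)
    _ ≤ _ := mul_le_of_le_one_left (Finset.sum_nonneg fun x _ => Real.rpow_nonneg (hg _) _) hs

/-- pointwise bound -/
theorem ptwise (m N : ℕ) (hm : 2 ≤ m) (hN : 1 ≤ N) (f : (Fin N → ZMod (m + 1)) → ℂ) (x) :
    smoothLocalMax m N f x ≤ 16 * aF (TT m N) (fun y => ‖f y‖) (4*(m*N+1)) x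
      + 16 * ∑ y, (((m*N/(m+1) : ℕ) : ℝ)+1)⁻¹ * (∑ k ∈ range (m*N/(m+1)+1), sg m N k y) * ‖f (x - y)‖ := by
  set Q := m*N/(m+1) with hQ
  have hQN : Q ≤ m * N := Nat.div_le_self _ _
  have hA : 0 ≤ aF (TT m N) (fun y => ‖f y‖) (4*(m*N+1)) x :=
    (aux_maxerg (TT m N) (TT_mono m N) (TT_one m N hm hN) (TT_sum m N hm hN) (fun y => ‖f y‖)
      (fun y => norm_nonneg _) _ 2 (by norm_num)).1 x
  have hsg : ∀ L y, 0 ≤ ∑ k ∈ range (L+1), sg m N k y := fun L y => Finset.sum_nonneg fun k _ => sg_nonneg _ _ _ _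
  have hB : 0 ≤ ∑ y, ((Q : ℝ)+1)⁻¹ * (∑ k ∈ range (Q+1), sg m N k y) * ‖f (x - y)‖ :=
    Finset.sum_nonneg fun y _ => mul_nonneg (mul_nonneg (by positivity) (hsg _ _)) (norm_nonneg _)
  apply Finset.sup'_le
  intro L hL
  have hLQ : L ≤ Q := by simp at hL; omega
  have hLp : (0:ℝ) < L + 1 := by positivity
  have h1 := norm_convC_sum m N L f x
  have hNp : (0:ℝ) < N := by exact_mod_cast hN
  have hmp : (0:ℝ) < m := by positivity
  rcases le_or_gt (4 * ((L:ℝ)+1) * (((m:ℝ)+1)/(m*N))) 1 with h | h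
  · have h2 : ∑ y, (∑ k ∈ range (L+1), sg m N k y) * ‖f (x - y)‖
        ≤ 4 * ∑ j ∈ range (4*(L+1)), (TT m N ^ j) (fun y => ‖f y‖) x := by
      simp only [mu_conv]
      rw [Finset.sum_comm, Finset.mul_sum]
      apply Finset.sum_le_sum; intro y _
      rw [← Finset.sum_mul, ← mul_assoc]
      exact mul_le_mul_of_nonneg_right (sg_le_mu m N L hm hN h y) (norm_nonneg _)
    have h3 := Finset.le_sup' (fun k : ℕ => (1/((k:ℝ)+1)) * ∑ j ∈ range (k+1), (TT m N^j) (fun y => ‖f y‖) x)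
      (mem_range.2 (show 4*L+3 < 4*(m*N+1)+1 by omega))
    change _ ≤ aF (TT m N) (fun y => ‖f y‖) (4*(m*N+1)) x at h3
    have e : 4*L+3+1 = 4*(L+1) := by ring
    rw [e] at h3
    have e2 : (((4*L+3:ℕ):ℝ)+1) = 4*((L:ℝ)+1) := by push_cast; ring
    rw [e2] at h3
    set S := ∑ j ∈ range (4*(L+1)), (TT m N ^ j) (fun y => ‖f y‖) x
    calc _ ≤ 1/((L:ℝ)+1) * (4 * S) := mul_le_mul_of_nonneg_left (h1.trans h2) (by positivity)
      _ = 16 * (1/(4*((L:ℝ)+1)) * S) := by field_simp; ring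
      _ ≤ _ := by linarith
  · have h2 : (Q:ℝ) + 1 ≤ 16 * (L+1) := by
      have hq : (Q:ℝ) * (m+1) ≤ m * N := by exact_mod_cast Nat.div_mul_le_self (m*N) (m+1)
      rw [← mul_div_assoc, lt_div_iff₀ (by positivity), one_mul] at h
      have h5 : (Q:ℝ) * (m+1) ≤ 4*(L+1) * (m+1) := by linarith
      have := le_of_mul_le_mul_right h5 (by positivity)
      have : (0:ℝ) ≤ L := by positivity
      linarith
    have h3 : ∑ y, (∑ k ∈ range (L+1), sg m N k y) * ‖f (x - y)‖ ≤ ∑ y, (∑ k ∈ range (Q+1), sg m N k y) * ‖f (x - y)‖ := by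
      apply Finset.sum_le_sum; intro y _
      apply mul_le_mul_of_nonneg_right _ (norm_nonneg _)
      exact Finset.sum_le_sum_of_subset_of_nonneg (range_subset_range.2 (by omega)) (fun k _ _ => sg_nonneg _ _ _ _)
    have hs0 : 0 ≤ ∑ y, (∑ k ∈ range (Q+1), sg m N k y) * ‖f (x - y)‖ :=
      Finset.sum_nonneg fun y _ => mul_nonneg (hsg _ _) (norm_nonneg _)
    have h4 : 1/((L:ℝ)+1) ≤ 16 * ((Q:ℝ)+1)⁻¹ := by
      rw [← div_eq_mul_inv, div_le_div_iff₀ hLp (by positivity)]; linarith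
    simp only [mul_assoc, ← Finset.mul_sum] at hB ⊢
    calc _ ≤ (16 * ((Q:ℝ)+1)⁻¹) * ∑ y, (∑ k ∈ range (Q+1), sg m N k y) * ‖f (x - y)‖ :=
          mul_le_mul h4 (h1.trans h3) (norm_nonneg _) (by positivity)
      _ ≤ _ := by linarith

theorem statement7 (m : ℕ) (hm : 2 ≤ m) (p : ℝ) (hp : 1 < p) :
    ∃ C : ℝ, ∀ N : ℕ, 1 ≤ N → ∀ f : (Fin N → ZMod (m + 1)) → ℂ,
      (∑ x, smoothLocalMax m N f x ^ p) ^ (1 / p) ≤ C * (∑ x, ‖f x‖ ^ p) ^ (1 / p) := by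
  refine ⟨16 * (p/(p-1)) + 16, fun N hN f => ?_⟩
  have hp0 : 0 < p := by linarith
  obtain ⟨hA, hA'⟩ := aux_maxerg (TT m N) (TT_mono m N) (TT_one m N hm hN) (TT_sum m N hm hN) (fun y => ‖f y‖)
      (fun y => norm_nonneg _) (4*(m*N+1)) p hp
  set A := aF (TT m N) (fun y => ‖f y‖) (4*(m*N+1))
  set Q := m*N/(m+1) with hQ
  let w : (Fin N → ZMod (m + 1)) → ℝ := fun y => ((Q : ℝ)+1)⁻¹ * (∑ k ∈ range (Q+1), sg m N k y)
  have hw0 : ∀ y, 0 ≤ w y := fun y => mul_nonneg (by positivity) (Finset.sum_nonneg fun k _ => sg_nonneg _ _ _ _)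
  have hw1 : ∑ y, w y ≤ 1 := by
    simp only [w, ← Finset.mul_sum]
    rw [Finset.sum_comm, inv_mul_le_iff₀ (by positivity), mul_one]
    refine (Finset.sum_le_sum fun k _ => sg_sum_le m N k).trans ?_
    simp
  have hB' := aux_young w (fun y => ‖f y‖) hw0 (fun y => norm_nonneg _) hw1 p hp
  set B : (Fin N → ZMod (m + 1)) → ℝ := fun x => ∑ y, w y * ‖f (x - y)‖ with hBdef
  have hB : ∀ x, 0 ≤ B x := fun x => Finset.sum_nonneg fun y _ => mul_nonneg (hw0 y) (norm_nonneg _)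
  have hpt : ∀ x, smoothLocalMax m N f x ≤ 16 * A x + 16 * B x := ptwise m N hm hN f
  have hM : ∀ x, 0 ≤ smoothLocalMax m N f x := fun x =>
    le_trans (by positivity) (Finset.le_sup' (fun L : ℕ =>
      (1 / ((L : ℝ) + 1)) * ‖∑ k ∈ Finset.range (L + 1), convC (sigmaC m N (k : ℤ)) f x‖)
      (mem_range.2 (Nat.succ_pos _)))
  have hscale : ∀ g : (Fin N → ZMod (m + 1)) → ℝ, (∀ x, 0 ≤ g x) →
      (∑ x, (16 * g x)^p)^(1/p) = 16 * (∑ x, g x^p)^(1/p) := by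
    intro g hg
    simp only [fun x => Real.mul_rpow (show (0:ℝ) ≤ 16 by norm_num) (hg x) (z := p)]
    rw [← Finset.mul_sum, Real.mul_rpow (by positivity) (Finset.sum_nonneg fun x _ => Real.rpow_nonneg (hg x) _),
      ← Real.rpow_mul (by norm_num), mul_one_div_cancel hp0.ne', Real.rpow_one]
  calc (∑ x, smoothLocalMax m N f x ^ p) ^ (1 / p)
      ≤ (∑ x, (16 * A x + 16 * B x) ^ p) ^ (1 / p) := by
        apply Real.rpow_le_rpow (Finset.sum_nonneg fun x _ => Real.rpow_nonneg (hM x) _) _ (by positivity)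
        exact Finset.sum_le_sum fun x _ => Real.rpow_le_rpow (hM x) (hpt x) hp0.le
    _ ≤ (∑ x, (16 * A x) ^ p) ^ (1 / p) + (∑ x, (16 * B x) ^ p) ^ (1 / p) :=
        Real.Lp_add_le_of_nonneg univ hp.le (fun x _ => mul_nonneg (by norm_num) (hA x)) (fun x _ => mul_nonneg (by norm_num) (hB x))
    _ ≤ _ := by
        rw [hscale A hA, hscale B hB]
        linarith
end
end

section
/- For all integers N ≥ 1, 0 ≤ r ≤ N, and 0 ≤ t ≤ k ≤ N, one has Σ_{j=0}^{t} (−1)^j · C(t,j) · κ_{k−j}^N(r) = (−1/c_m)^t · (C(N−t, r−t)/C(N,r)) · κ_{k−t}^{N−t}(r−t), with the conventions C(N−t, r−t) = 0 for r < t and κ with any negative argument equal to 0; in particular the left-hand side is 0 whenever r < t. -/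
noncomputable section

/-- The normalized Krawtchouk polynomial
`κ_k^N(r) = Σ_{j=max(0,r+k-N)}^{min(r,k)} (-1)^j C(N,k)⁻¹ C(r,j) C(N-r,k-j) m^{-j}`.
(Natural subtraction `r + k - N` is exactly `max (0, r + k - N)`.) -/
def kraw (m NN k r : ℕ) : ℝ :=
  ∑ j ∈ Finset.Icc (r + k - NN) (min r k),
    (-1 : ℝ) ^ j * ((NN.choose k : ℝ))⁻¹ * (r.choose j : ℝ) *
      (((NN - r).choose (k - j) : ℝ)) * ((m : ℝ)⁻¹) ^ j

/-- Krawtchouk polynomial with integer arguments: `0` if any argument is negative. -/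
def krawZ (m : ℕ) (NN k r : ℤ) : ℝ :=
  if 0 ≤ NN ∧ 0 ≤ k ∧ 0 ≤ r then kraw m NN.toNat k.toNat r.toNat else 0

/-- Binomial coefficient with integer arguments: `0` if either argument is negative. -/
def chooseZ (a b : ℤ) : ℕ :=
  if 0 ≤ a ∧ 0 ≤ b then a.toNat.choose b.toNat else 0

open Polynomial in
def krP (x : ℝ) (r s : ℕ) : ℝ[X] := (1 + C x * X) ^ r * (1 + X) ^ s

open Polynomial in
lemma krP_coeff (x : ℝ) (r s k : ℕ) : (krP x r s).coeff k =
    ∑ j ∈ Finset.range (k + 1), (r.choose j : ℝ) * x ^ j * (s.choose (k - j) : ℝ) := by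
  have h : (1 + C x * X : ℝ[X]) ^ r = ((1 + X) ^ r : ℝ[X]).comp (C x * X) := by simp
  rw [krP, coeff_mul, Finset.Nat.sum_antidiagonal_eq_sum_range_succ_mk]
  apply Finset.sum_congr rfl
  intro j _
  rw [h, comp_C_mul_X_coeff, coeff_one_add_X_pow, coeff_one_add_X_pow]

lemma kraw_eq (m r s k : ℕ) : kraw m (r + s) k r =
    (((r + s).choose k : ℕ) : ℝ)⁻¹ * (krP (-(m : ℝ)⁻¹) r s).coeff k := by
  rw [krP_coeff, kraw, Finset.mul_sum]
  have hs : r + s - r = s := by omega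
  rw [hs]
  rw [← Finset.sum_subset (s₁ := Finset.Icc (r + k - (r + s)) (min r k)) (s₂ := Finset.range (k + 1))]
  · apply Finset.sum_congr rfl
    intro j _
    rw [neg_pow ((m : ℝ)⁻¹)]
    ring
  · intro j hj
    simp only [Finset.mem_Icc, Finset.mem_range] at *
    omega
  · intro j hj hj'
    simp only [Finset.mem_Icc, Finset.mem_range] at *
    by_cases h : r < j
    · simp [Nat.choose_eq_zero_of_lt h]
    · have : s < k - j := by omega
      simp [Nat.choose_eq_zero_of_lt this]

open Polynomial in
lemma krP_deriv (x : ℝ) (a s : ℕ) : (1 + X) * derivative (krP x (a + 1) s) =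
    C ((a : ℝ) + 1 + s) * krP x (a + 1) s + C (((a : ℝ) + 1) * (x - 1)) * krP x a s := by
  unfold krP
  cases s with
  | zero =>
    simp [derivative_pow]
    ring
  | succ s =>
    simp [derivative_pow]
    ring

open Polynomial in
lemma krP_rec (x : ℝ) (a s k : ℕ) :
    ((k : ℝ) + 1) * (krP x (a + 1) s).coeff (k + 1) =
      ((a : ℝ) + 1 + s - k) * (krP x (a + 1) s).coeff k
        + ((a : ℝ) + 1) * (x - 1) * (krP x a s).coeff k := by
  have h := congrArg (fun p => p.coeff k) (krP_deriv x a s)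
  simp only [coeff_add, coeff_C_mul, add_mul, one_mul, coeff_derivative] at h
  cases k with
  | zero => 
    simp at h ⊢
    linarith
  | succ k =>
    rw [coeff_X_mul, coeff_derivative] at h
    push_cast at h ⊢
    linarith

lemma kraw_step (m a s k : ℕ) (hk : k ≤ a + s) :
    kraw m (a + 1 + s) (k + 1) (a + 1) - kraw m (a + 1 + s) k (a + 1) =
      -(1 + (m : ℝ)⁻¹) * (((a : ℝ) + 1) / ((a : ℝ) + 1 + s)) * kraw m (a + s) k a := by
  rw [kraw_eq, kraw_eq, kraw_eq]
  have h := krP_rec (-(m : ℝ)⁻¹) a s k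
  have e : a + 1 + s = a + s + 1 := by ring
  rw [e]
  have h1 : ((a : ℝ) + s + 1) * ((a + s).choose k : ℝ)
      = ((a + s + 1).choose (k + 1) : ℝ) * (k + 1) := by
    exact_mod_cast Nat.add_one_mul_choose_eq (a + s) k
  have h2 : ((a + s + 1).choose (k + 1) : ℝ) * (k + 1)
      = ((a + s + 1).choose k : ℝ) * ((a : ℝ) + 1 + s - k) := by
    have := Nat.choose_succ_right_eq (a + s + 1) k
    have h3 : ((a + s + 1 - k : ℕ) : ℝ) = (a : ℝ) + 1 + s - k := by
      rw [Nat.cast_sub (by omega)]; push_cast; ring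
    rw [← h3]
    exact_mod_cast this
  have p0 : ((a + s).choose k : ℝ) ≠ 0 := by
    exact_mod_cast (Nat.choose_pos hk).ne'
  have p1 : ((a + s + 1).choose (k + 1) : ℝ) ≠ 0 := by
    exact_mod_cast (Nat.choose_pos (by omega)).ne'
  have p2 : ((a + s + 1).choose k : ℝ) ≠ 0 := by
    exact_mod_cast (Nat.choose_pos (by omega)).ne'
  have p3 : (a : ℝ) + 1 + s ≠ 0 := by positivity
  have p4 : (k : ℝ) + 1 ≠ 0 := by positivity
  have hka : (k : ℝ) ≤ a + s := by exact_mod_cast hk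
  have p5 : (a : ℝ) + 1 + s - k ≠ 0 := by
    have : 0 < (a : ℝ) + 1 + s - k := by linarith
    exact this.ne'
  have i1 : ((a + s + 1).choose (k + 1) : ℝ)⁻¹
      = (k + 1) * (((a : ℝ) + 1 + s)⁻¹ * ((a + s).choose k : ℝ)⁻¹) := by
    rw [← mul_inv, show ((a : ℝ) + 1 + s) * ((a + s).choose k : ℝ)
      = ((a + s + 1).choose (k + 1) : ℝ) * (k + 1) by rw [← h1]; ring]
    field_simp
  have i2 : ((a + s + 1).choose k : ℝ)⁻¹
      = ((a : ℝ) + 1 + s - k) * (((a : ℝ) + 1 + s)⁻¹ * ((a + s).choose k : ℝ)⁻¹) := by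
    rw [← mul_inv, show ((a : ℝ) + 1 + s) * ((a + s).choose k : ℝ)
      = ((a + s + 1).choose k : ℝ) * ((a : ℝ) + 1 + s - k) by rw [← h2, ← h1]; ring]
    field_simp
  rw [i1, i2, div_eq_mul_inv]
  linear_combination (((a : ℝ) + 1 + s)⁻¹ * ((a + s).choose k : ℝ)⁻¹) * h

lemma kraw_zero_right (m N k : ℕ) (hk : k ≤ N) : kraw m N k 0 = 1 := by
  have := kraw_eq m 0 N k
  rw [Nat.zero_add] at this
  rw [this, krP]
  have p : (N.choose k : ℝ) ≠ 0 := by exact_mod_cast (Nat.choose_pos hk).ne'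
  simp [Polynomial.coeff_one_add_X_pow, p]

lemma diff_rec (f : ℕ → ℝ) (t : ℕ) :
    ∑ j ∈ Finset.range (t + 1 + 1), (-1 : ℝ) ^ j * ((t + 1).choose j : ℝ) * f j =
    ∑ j ∈ Finset.range (t + 1), (-1 : ℝ) ^ j * (t.choose j : ℝ) * f j -
    ∑ j ∈ Finset.range (t + 1), (-1 : ℝ) ^ j * (t.choose j : ℝ) * f (j + 1) := by
  have e : ∑ j ∈ Finset.range (t + 1), (-1 : ℝ) ^ j * (t.choose j : ℝ) * f j
      = ∑ j ∈ Finset.range (t + 1 + 1), (-1 : ℝ) ^ j * (t.choose j : ℝ) * f j := by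
    rw [Finset.sum_range_succ _ (t + 1)]
    simp
  rw [e, Finset.sum_range_succ', Finset.sum_range_succ' _ (t + 1), add_sub_right_comm,
    ← Finset.sum_sub_distrib]
  congr 1
  · apply Finset.sum_congr rfl
    intro j _
    rw [Nat.choose_succ_succ]
    push_cast
    ring
  · simp

lemma chooseZ_sub (N r t : ℕ) (h : t ≤ r) (hr : r ≤ N) :
    chooseZ ((N : ℤ) - t) ((r : ℤ) - t) = (N - t).choose (r - t) := by
  rw [chooseZ, if_pos (by omega)]
  congr 1 <;> omega

lemma krawZ_sub (m N k r t : ℕ) (h : t ≤ r) (hr : r ≤ N) (hk : t ≤ k) :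
    krawZ m ((N : ℤ) - t) ((k : ℤ) - t) ((r : ℤ) - t) = kraw m (N - t) (k - t) (r - t) := by
  rw [krawZ, if_pos (by omega)]
  congr 1 <;> omega

lemma chooseZ_neg (N r t : ℕ) (h : r < t) :
    chooseZ ((N : ℤ) - t) ((r : ℤ) - t) = 0 := by
  rw [chooseZ, if_neg (by omega)]

theorem statement9 (m : ℕ) (hm : 2 ≤ m) (N r k t : ℕ) (hN : 1 ≤ N)
    (hr : r ≤ N) (ht : t ≤ k) (hk : k ≤ N) :
    ∑ j ∈ Finset.range (t + 1), (-1 : ℝ) ^ j * (t.choose j : ℝ) * kraw m N (k - j) r =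
      (-(1 / ((m : ℝ) / (m + 1)))) ^ t *
        ((chooseZ ((N : ℤ) - t) ((r : ℤ) - t) : ℝ) / (N.choose r : ℝ)) *
        krawZ m ((N : ℤ) - t) ((k : ℤ) - t) ((r : ℤ) - t) := by
  have hm0 : (m : ℝ) ≠ 0 := by
    have : m ≠ 0 := by omega
    exact_mod_cast this
  have hc : (-(1 / ((m : ℝ) / (m + 1)))) = -(1 + (m : ℝ)⁻¹) := by field_simp
  rw [hc]
  clear hN
  induction t generalizing k with
  | zero =>
    have p : (N.choose r : ℝ) ≠ 0 := by exact_mod_cast (Nat.choose_pos hr).ne'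
    rw [chooseZ_sub N r 0 (by omega) hr, krawZ_sub m N k r 0 (by omega) hr (by omega)]
    simp [p]
  | succ t ih =>
    obtain ⟨k, rfl⟩ : ∃ k', k = k' + 1 := ⟨k - 1, by omega⟩
    rw [diff_rec (fun j => kraw m N (k + 1 - j) r)]
    simp only [Nat.add_sub_add_right]
    rw [ih (k + 1) (by omega) hk, ih k (by omega) (by omega)]
    rcases lt_trichotomy r t with h | h | h
    · rw [chooseZ_neg N r t h, chooseZ_neg N r (t + 1) (by omega)]
      simp
    · rw [chooseZ_neg N r (t + 1) (by omega), krawZ_sub m N _ r t (by omega) hr (by omega),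
        krawZ_sub m N _ r t (by omega) hr (by omega), h, Nat.sub_self,
        kraw_zero_right _ _ _ (by omega), kraw_zero_right _ _ _ (by omega)]
      simp
    · rw [chooseZ_sub N r t (by omega) hr, chooseZ_sub N r (t + 1) (by omega) hr,
        krawZ_sub m N _ r t (by omega) hr (by omega),
        krawZ_sub m N _ r t (by omega) hr (by omega),
        krawZ_sub m N _ r (t + 1) (by omega) hr (by omega)]
      obtain ⟨a, rfl⟩ : ∃ a, r = t + 1 + a := ⟨r - (t + 1), by omega⟩
      obtain ⟨s, rfl⟩ : ∃ s, N = t + 1 + a + s := ⟨N - (t + 1 + a), by omega⟩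
      obtain ⟨b, rfl⟩ : ∃ b, k = t + b := ⟨k - t, by omega⟩
      have e1 : t + 1 + a + s - t = a + 1 + s := by omega
      have e2 : t + 1 + a + s - (t + 1) = a + s := by omega
      have e3 : t + 1 + a - t = a + 1 := by omega
      have e4 : t + 1 + a - (t + 1) = a := by omega
      have e5 : t + b + 1 - t = b + 1 := by omega
      have e6 : t + b - t = b := by omega
      have e7 : t + b + 1 - (t + 1) = b := by omega
      rw [e1, e2, e3, e4, e5, e6, e7]
      have hs := kraw_step m a s b (by omega)
      have hch : ((a : ℝ) + 1 + s) * ((a + s).choose a : ℝ)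
          = ((a + 1 + s).choose (a + 1) : ℝ) * (a + 1) := by
        have := Nat.add_one_mul_choose_eq (a + s) a
        rw [show a + s + 1 = a + 1 + s by ring] at this
        exact_mod_cast this
      have p3 : (a : ℝ) + 1 + s ≠ 0 := by positivity
      have hch' : ((a + s).choose a : ℝ)
          = ((a + 1 + s).choose (a + 1) : ℝ) * (((a : ℝ) + 1) / ((a : ℝ) + 1 + s)) := by
        field_simp
        linarith
      rw [← mul_sub, hs, hch', pow_succ]
      ring
end
end

section
/- For every integer m ≥ 2 there exists a constant d > 0, depending only on m, such that for all integers N ≥ 1 and all integers 0 ≤ r, k ≤ N, |κ_k^N(r)| ≤ exp(−d·r·k/N). -/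
noncomputable section

lemma cs_real (n k : ℕ) : (n.choose (k+1) : ℝ) * (k+1) = n.choose k * ((n:ℝ) - k) := by
  rcases le_or_gt k n with h | h
  · have := Nat.choose_succ_right_eq n k
    have h2 : ((n.choose (k+1) * (k+1) : ℕ) : ℝ) = ((n.choose k * (n - k) : ℕ) : ℝ) := by
      rw [this]
    push_cast [Nat.cast_sub h] at h2
    exact h2
  · rw [Nat.choose_eq_zero_of_lt h, Nat.choose_eq_zero_of_lt (by omega)]
    simp

def AA (q : ℝ) (r M k : ℕ) : ℝ :=
  ∑ i ∈ Finset.range (k+1), (r.choose i : ℝ) * (M.choose (k - i) : ℝ) * q ^ i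

def BB (q : ℝ) (r M k : ℕ) : ℝ :=
  ∑ i ∈ Finset.range (k+1), (r.choose i : ℝ) * (M.choose (k - i) : ℝ) * (q ^ i * ((r:ℝ) - i))

lemma AA_nonneg (q : ℝ) (hq : 0 ≤ q) (r M k : ℕ) : 0 ≤ AA q r M k :=
  Finset.sum_nonneg fun i _ => by positivity

lemma AA_one (r M k : ℕ) : AA 1 r M k = ((r + M).choose k : ℝ) := by
  rw [Nat.add_choose_eq, Finset.Nat.sum_antidiagonal_eq_sum_range_succ_mk]
  simp [AA]

lemma AA_rec (q : ℝ) (r M k : ℕ) :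
    ((k:ℝ) + 1) * AA q r M (k+1) = (((r + M : ℕ) : ℝ) - k) * AA q r M k - (1 - q) * BB q r M k := by
  have h1 : ((k:ℝ) + 1) * AA q r M (k+1) =
      (∑ i ∈ Finset.range (k+1+1), ((r.choose i : ℝ) * i) * (M.choose (k + 1 - i) : ℝ) * q ^ i) +
      ∑ i ∈ Finset.range (k+1+1),
        (r.choose i : ℝ) * ((M.choose (k + 1 - i) : ℝ) * ((k:ℝ) + 1 - i)) * q ^ i := by
    rw [AA, Finset.mul_sum, ← Finset.sum_add_distrib]
    refine Finset.sum_congr rfl fun i _ => by ring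
  rw [h1, Finset.sum_range_succ', Finset.sum_range_succ _ (k+1), AA, BB, Finset.mul_sum,
    Finset.mul_sum, ← Finset.sum_sub_distrib]
  simp only [Nat.cast_zero, mul_zero, zero_mul, add_zero, Nat.cast_add, Nat.cast_one, sub_self]
  rw [← Finset.sum_add_distrib]
  refine Finset.sum_congr rfl fun i hi => ?_
  have hi' : i ≤ k := by simpa [Nat.lt_succ_iff] using hi
  have e1 := cs_real r i
  have e2 := cs_real M (k - i)
  rw [Nat.cast_sub hi'] at e2
  have e3 : k + 1 - i = k - i + 1 := by omega
  have e4 : k + 1 - (i + 1) = k - i := by omega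
  have e5 : (k:ℝ) + 1 - i = k - i + 1 := by ring
  rw [e3, e4, e5, e1, e2]
  ring

lemma BB_one (r M k : ℕ) (h : 1 ≤ r + M) :
    ((r + M : ℕ) : ℝ) * BB 1 r M k = r * (((r + M : ℕ) : ℝ) - k) * ((r + M).choose k : ℝ) := by
  rcases r with _ | r
  · have : BB 1 0 M k = 0 := by
      apply Finset.sum_eq_zero
      intro i _
      rcases i with _ | i <;> simp
    rw [this]; simp
  have h1 : BB 1 (r+1) M k = (r + 1) * AA 1 r M k := by
    rw [BB, AA, Finset.mul_sum]
    refine Finset.sum_congr rfl fun i _ => ?_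
    have e := cs_real (r+1) i
    have e' : ((r:ℝ) + 1) * r.choose i = (r+1).choose (i+1) * (i+1) := by
      exact_mod_cast Nat.add_one_mul_choose_eq r i
    push_cast at e ⊢
    have : ((r + 1).choose i : ℝ) * ((r:ℝ) + 1 - i) = (r + 1) * r.choose i := by
      rw [e', e]
    simp only [one_pow, one_mul, mul_one]
    linear_combination (M.choose (k - i) : ℝ) * this
  rw [h1, AA_one]
  have e := cs_real (r + 1 + M) k
  have e' : (((r:ℝ) + M) + 1) * (r + M).choose k = (r+M+1).choose (k+1) * (k+1) := by
    exact_mod_cast Nat.add_one_mul_choose_eq (r+M) k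
  have e3 : r + 1 + M = r + M + 1 := by ring
  rw [e3] at e ⊢
  push_cast at e ⊢
  linear_combination ((r:ℝ) + 1) * (e' + e)

lemma cheb (s : Finset ℕ) (w f g : ℕ → ℝ) (hw : ∀ i, 0 ≤ w i)
    (h : ∀ i j, 0 ≤ (f i - f j) * (g i - g j)) :
    (∑ i ∈ s, w i * f i) * (∑ i ∈ s, w i * g i) ≤ (∑ i ∈ s, w i) * ∑ i ∈ s, w i * (f i * g i) := by
  have h0 : 0 ≤ ∑ i ∈ s, ∑ j ∈ s, w i * w j * ((f i - f j) * (g i - g j)) :=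
    Finset.sum_nonneg fun i _ => Finset.sum_nonneg fun j _ =>
      mul_nonneg (mul_nonneg (hw i) (hw j)) (h i j)
  have h1 : ∑ i ∈ s, ∑ j ∈ s, w i * w j * ((f i - f j) * (g i - g j)) =
      (∑ i ∈ s, w i * (f i * g i)) * (∑ i ∈ s, w i) + (∑ i ∈ s, w i) * (∑ i ∈ s, w i * (f i * g i))
      - (∑ i ∈ s, w i * f i) * (∑ i ∈ s, w i * g i)
      - (∑ i ∈ s, w i * g i) * (∑ i ∈ s, w i * f i) := by
    simp only [Finset.sum_mul_sum, ← Finset.sum_add_distrib, ← Finset.sum_sub_distrib]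
    refine Finset.sum_congr rfl fun i _ => Finset.sum_congr rfl fun j _ => by ring
  linarith [mul_comm (∑ i ∈ s, w i) (∑ i ∈ s, w i * (f i * g i)),
    mul_comm (∑ i ∈ s, w i * f i) (∑ i ∈ s, w i * g i)]

lemma pow_cheb (q : ℝ) (hq : 0 ≤ q) (hq1 : q ≤ 1) (r : ℝ) (i j : ℕ) :
    0 ≤ (q ^ i - q ^ j) * ((r - i) - (r - j)) := by
  rcases le_total i j with h | h
  · have := pow_le_pow_of_le_one hq hq1 h
    have h' : (i:ℝ) ≤ j := by exact_mod_cast h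
    apply mul_nonneg <;> linarith
  · have := pow_le_pow_of_le_one hq hq1 h
    have h' : (j:ℝ) ≤ i := by exact_mod_cast h
    apply mul_nonneg_of_nonpos_of_nonpos <;> linarith

lemma BB_lower (q : ℝ) (hq : 0 ≤ q) (hq1 : q ≤ 1) (r M k : ℕ) :
    AA q r M k * BB 1 r M k ≤ ((r + M).choose k : ℝ) * BB q r M k := by
  have := cheb (Finset.range (k+1)) (fun i => (r.choose i : ℝ) * (M.choose (k - i) : ℝ))
    (fun i => q ^ i) (fun i => (r:ℝ) - i) (fun i => by positivity)
    (fun i j => pow_cheb q hq hq1 r i j)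
  rw [← AA_one]
  simpa [AA, BB] using this

lemma AA_bound (q : ℝ) (hq : 0 ≤ q) (hq1 : q ≤ 1) (r M : ℕ) (h : 1 ≤ r + M) (k : ℕ)
    (hk : k ≤ r + M) :
    AA q r M k ≤ ((r + M).choose k : ℝ) * (1 - (1 - q) * r / ((r + M : ℕ) : ℝ)) ^ k := by
  have hN : (0:ℝ) < ((r + M : ℕ) : ℝ) := by exact_mod_cast h
  set t := (1 - (1 - q) * r / ((r + M : ℕ) : ℝ)) with ht
  have ht0 : 0 ≤ t := by
    rw [ht, sub_nonneg, div_le_one hN]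
    have : (r:ℝ) ≤ ((r + M : ℕ) : ℝ) := by exact_mod_cast Nat.le_add_right r M
    nlinarith [Nat.cast_nonneg (α := ℝ) r]
  induction k with
  | zero => simp [AA]
  | succ k ih =>
    have ih := ih (by omega)
    have hkN : (0:ℝ) ≤ ((r + M : ℕ) : ℝ) - k := by
      have : (k:ℝ) ≤ ((r + M : ℕ) : ℝ) := by exact_mod_cast (by omega : k ≤ r + M)
      linarith
    have hC : (0:ℝ) < ((r + M).choose k : ℝ) := by
      exact_mod_cast Nat.choose_pos (by omega : k ≤ r + M)
    have b1 := BB_lower q hq hq1 r M k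
    have b2 := BB_one r M k h
    have rec1 := AA_rec q r M k
    have cs := cs_real (r + M) k
    generalize ((r + M : ℕ) : ℝ) = N at *
    have b3 : AA q r M k * (r * (N - k)) ≤ N * BB q r M k := by
      refine le_of_mul_le_mul_left ?_ hC
      calc _ = AA q r M k * (r * (N - k) * ((r + M).choose k : ℝ)) := by ring
        _ = N * (AA q r M k * BB 1 r M k) := by rw [← b2]; ring
        _ ≤ N * (((r + M).choose k : ℝ) * BB q r M k) := by gcongr
        _ = _ := by ring
    have b4 : AA q r M k * (r * (N - k)) / N ≤ BB q r M k := by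
      rw [div_le_iff₀ hN]; linarith
    have b5 : ((k:ℝ) + 1) * AA q r M (k+1) ≤ (N - k) * AA q r M k * t := by
      have : (1 - q) * (AA q r M k * (r * (N - k)) / N) ≤ (1 - q) * BB q r M k :=
        mul_le_mul_of_nonneg_left b4 (by linarith)
      have e : (N - k) * AA q r M k * t
        = (N - k) * AA q r M k - (1 - q) * (AA q r M k * (r * (N - k)) / N) := by
        rw [ht]; ring
      linarith
    have hk1 : (0:ℝ) < (k:ℝ) + 1 := by positivity
    refine le_of_mul_le_mul_left ?_ hk1
    calc _ ≤ (N - k) * AA q r M k * t := b5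
      _ ≤ (N - k) * (((r + M).choose k : ℝ) * t ^ k) * t := by gcongr
      _ = (((r + M).choose k : ℝ) * (N - k)) * t ^ (k+1) := by ring
      _ = _ := by rw [← cs]; ring

theorem statement10 (m : ℕ) (hm : 2 ≤ m) :
    ∃ d : ℝ, 0 < d ∧ ∀ N r k : ℕ, 1 ≤ N → r ≤ N → k ≤ N →
      |kraw m N k r| ≤ Real.exp (-(d * r * k / N)) := by
  have hm' : (1:ℝ) < m := by exact_mod_cast hm
  have hq0 : (0:ℝ) ≤ (m:ℝ)⁻¹ := by positivity
  have hq1 : (m:ℝ)⁻¹ < 1 := inv_lt_one_of_one_lt₀ hm'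
  refine ⟨1 - (m:ℝ)⁻¹, by linarith, ?_⟩
  intro N r k hN hr hk
  obtain ⟨M, rfl⟩ := Nat.exists_eq_add_of_le hr
  set q := (m:ℝ)⁻¹ with hq
  have hC : (0:ℝ) < ((r + M).choose k : ℝ) := by exact_mod_cast Nat.choose_pos hk
  have hb := AA_bound q hq0 hq1.le r M hN k hk
  have hNN : (0:ℝ) < ((r + M : ℕ) : ℝ) := by exact_mod_cast hN
  have h1 : |kraw m (r + M) k r| ≤ ((r + M).choose k : ℝ)⁻¹ * AA q r M k := by
    unfold kraw AA
    refine (Finset.abs_sum_le_sum_abs _ _).trans ?_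
    rw [Finset.mul_sum]
    refine (Finset.sum_le_sum_of_subset_of_nonneg (t := Finset.range (k+1)) ?_ ?_).trans ?_
    · intro i hi
      simp only [Finset.mem_Icc, Finset.mem_range] at hi ⊢
      omega
    · intros; positivity
    · refine Finset.sum_le_sum fun i _ => ?_
      rw [← hq, Nat.add_sub_cancel_left]
      simp only [abs_mul, abs_pow, abs_neg, abs_one, one_pow, one_mul, abs_inv, Nat.abs_cast,
        abs_of_nonneg hq0]
      exact le_of_eq (by ring)
  have ht0 : 0 ≤ 1 - (1 - q) * r / ((r + M : ℕ) : ℝ) := by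
    rw [sub_nonneg, div_le_one hNN]
    have : (r:ℝ) ≤ ((r + M : ℕ) : ℝ) := by exact_mod_cast hr
    nlinarith [Nat.cast_nonneg (α := ℝ) r]
  calc _ ≤ ((r + M).choose k : ℝ)⁻¹ * AA q r M k := h1
    _ ≤ ((r + M).choose k : ℝ)⁻¹ *
        (((r + M).choose k : ℝ) * (1 - (1 - q) * r / ((r + M : ℕ) : ℝ)) ^ k) := by gcongr
    _ = (1 - (1 - q) * r / ((r + M : ℕ) : ℝ)) ^ k := by field_simp
    _ ≤ (Real.exp (-((1 - q) * r / ((r + M : ℕ) : ℝ)))) ^ k := by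
        gcongr
        linarith [Real.add_one_le_exp (-((1 - q) * r / ((r + M : ℕ) : ℝ)))]
    _ = _ := by
        rw [← Real.exp_nat_mul]
        congr 1
        ring
end
end

section
/- For every integer m ≥ 2 and every real p > 1 there exists a constant C = C(p,m), independent of N, such that for every integer N ≥ 1 and every f : G → ℂ, the local spherical maximal function M^L f(x) = max over integers 0 ≤ k ≤ c_m·N of |(σ_k * f)(x)| satisfies ‖M^L f‖_{L^p(G)} ≤ C · ‖f‖_{L^p(G)}. -/
open Finset

noncomputable section

/-- The local spherical maximal function `M^L f (x) = max_{0 ≤ k ≤ c_m N} |(σ_k * f)(x)|`.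
The integers `k` with `0 ≤ k ≤ c_m·N = m·N/(m+1)` are exactly those with
`k ≤ ⌊m·N/(m+1)⌋ = (m*N)/(m+1)` (natural division). -/
def localMax (m N : ℕ) (f : (Fin N → ZMod (m + 1)) → ℂ) (x : Fin N → ZMod (m + 1)) : ℝ :=
  (Finset.range ((m * N) / (m + 1) + 1)).sup' Finset.nonempty_range_add_one fun k =>
    ‖convC (sigmaC m N (k : ℤ)) f x‖


lemma x_young {p : ℝ} (hp : 1 < p) {a b : ℝ} (ha : 0 ≤ a) (hb : 0 ≤ b) :
    a * b ^ (p - 1) ≤ a ^ p / p + (p - 1) / p * b ^ p := by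
  have hc : p.HolderConjugate (p / (p - 1)) := Real.HolderConjugate.conjExponent hp
  have := Real.young_inequality_of_nonneg ha (Real.rpow_nonneg hb (p - 1)) hc
  rw [← Real.rpow_mul hb] at this
  have h1 : (p - 1) * (p / (p - 1)) = p := by
    have : p - 1 ≠ 0 := by linarith
    field_simp
  rw [h1] at this
  calc _ ≤ _ := this
    _ = _ := by
      have : p - 1 ≠ 0 := by linarith
      field_simp

/-- running maximum -/
def xMm {G : Type*} (g : ℕ → G → ℝ) : ℕ → G → ℝ
  | 0 => fun _ => 0
  | (n + 1) => fun x => max (xMm g n x) (g n x)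

lemma xMm_nonneg {G : Type*} (g : ℕ → G → ℝ) (n : ℕ) (x : G) : 0 ≤ xMm g n x := by
  induction n with
  | zero => simp [xMm]
  | succ n ih => exact le_max_of_le_left ih

lemma xMm_ge {G : Type*} (g : ℕ → G → ℝ) (n i : ℕ) (hi : i < n) (x : G) : g i x ≤ xMm g n x := by
  induction n with
  | zero => omega
  | succ n ih =>
    rcases Nat.lt_succ_iff_lt_or_eq.mp hi with h | h
    · exact le_max_of_le_left (ih h)
    · subst h; exact le_max_right _ _

lemma x_doob_aux {p : ℝ} (hp : 1 < p) {a g : ℝ} (ha : 0 ≤ a) (hg : 0 ≤ g) :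
    (max a g) ^ p - a ^ p ≤ (p / (p - 1)) * (((max a g) ^ (p - 1) - a ^ (p - 1)) * g) := by
  rcases le_total g a with h | h
  · rw [max_eq_left h]; simp
  · rw [max_eq_right h]
    have h1 := x_young hp hg ha
    have h2 : g ^ (p - 1) * g = g ^ p := by
      rcases hg.eq_or_lt with h | h
      · simp [← h, Real.zero_rpow (show p ≠ 0 by linarith)]
      · rw [Real.rpow_sub_one h.ne']; field_simp
    have hp1 : 0 < p - 1 := by linarith
    rw [sub_mul, h2]
    have : (p / (p - 1)) * (g ^ p - a ^ (p - 1) * g) - (g ^ p - a ^ p)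
      = (p / (p - 1)) * (g ^ p / p + (p - 1) / p * a ^ p - g * a ^ (p - 1)) := by
      field_simp; ring
    have h3 : 0 ≤ (p / (p - 1)) * (g ^ p / p + (p - 1) / p * a ^ p - g * a ^ (p - 1)) := by
      apply mul_nonneg (by positivity); linarith
    linarith

lemma x_absorb {p : ℝ} (hp : 1 < p) {X F q : ℝ} (hX : 0 ≤ X) (hF : 0 ≤ F) (hq : 0 ≤ q)
    (h : X ≤ q * (F ^ (1 / p) * X ^ ((p - 1) / p))) : X ≤ q ^ p * F := by
  rcases hX.eq_or_lt with h0 | h0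
  · rw [← h0]; positivity
  have hp0 : 0 < p := by linarith
  have h1 : X ^ (1 / p) ≤ q * F ^ (1 / p) := by
    have h2 : X = X ^ (1 / p) * X ^ ((p - 1) / p) := by
      rw [← Real.rpow_add h0, ← add_div]; rw [show 1 + (p - 1) = p by ring, div_self hp0.ne', Real.rpow_one]
    have h3 : 0 < X ^ ((p - 1) / p) := Real.rpow_pos_of_pos h0 _
    rw [← mul_assoc] at h
    nth_rewrite 1 [h2] at h
    exact le_of_mul_le_mul_right h h3
  calc X = (X ^ (1 / p)) ^ p := by rw [← Real.rpow_mul hX]; field_simp; simp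
    _ ≤ (q * F ^ (1 / p)) ^ p := by gcongr
    _ = _ := by
      rw [Real.mul_rpow hq (by positivity), ← Real.rpow_mul hF]; field_simp; simp

lemma x_doob {G : Type*} [AddCommGroup G] [Fintype G] (H : ℕ → AddSubgroup G) (hH : Antitone H)
    (f : G → ℝ) (hf : ∀ x, 0 ≤ f x) (g : ℕ → G → ℝ) (hg : ∀ i x, 0 ≤ g i x)
    (hinv : ∀ i x, ∀ z ∈ H i, g i (x - z) = g i x)
    (hadj : ∀ i (b : G → ℝ), (∀ x, ∀ z ∈ H i, b (x - z) = b x) → ∑ x, b x * g i x = ∑ x, b x * f x)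
    {p : ℝ} (hp : 1 < p) (n : ℕ) :
    ∑ x, (xMm g n x) ^ p ≤ (p / (p - 1)) ^ p * ∑ x, f x ^ p := by
  have hM : ∀ n i, n ≤ i + 1 → ∀ x, ∀ z ∈ H i, xMm g n (x - z) = xMm g n x := by
    intro n
    induction n with
    | zero => intros; simp [xMm]
    | succ n ih =>
      intro i hi x z hz
      simp only [xMm]
      rw [ih i (by omega) x z hz, hinv n x z (hH (by omega) hz)]
  have hp1 : 0 < p - 1 := by linarith
  have key : ∑ x, (xMm g n x) ^ p ≤ (p / (p - 1)) * ∑ x, (xMm g n x) ^ (p - 1) * f x := by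
    induction n with
    | zero => simp [xMm, Real.zero_rpow (show p ≠ 0 by linarith), Real.zero_rpow hp1.ne']
    | succ n ih =>
      have h1 : ∑ x, ((xMm g (n+1) x) ^ p - (xMm g n x) ^ p) ≤
          (p / (p - 1)) * ∑ x, ((xMm g (n+1) x) ^ (p-1) - (xMm g n x) ^ (p-1)) * f x := by
        rw [← hadj n, Finset.mul_sum]
        · exact Finset.sum_le_sum fun x _ => x_doob_aux hp (xMm_nonneg g n x) (hg n x)
        · intro x z hz
          rw [hM (n+1) n le_rfl x z hz, hM n n (by omega) x z hz]
      simp only [sub_mul, Finset.sum_sub_distrib, mul_sub] at h1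
      linarith
  apply x_absorb hp
  · exact Finset.sum_nonneg fun x _ => Real.rpow_nonneg (xMm_nonneg _ _ _) _
  · exact Finset.sum_nonneg fun x _ => Real.rpow_nonneg (hf x) _
  · positivity
  · refine key.trans ?_
    gcongr
    have hc : p.HolderConjugate (p / (p - 1)) := Real.HolderConjugate.conjExponent hp
    have := Real.inner_le_Lp_mul_Lq_of_nonneg Finset.univ hc (f := f) (g := fun x => xMm g n x ^ (p-1))
      (fun x _ => hf x) (fun x _ => Real.rpow_nonneg (xMm_nonneg _ _ _) _)
    simp only [mul_comm (f _)] at this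
    refine this.trans (le_of_eq ?_)
    congr 1
    rw [one_div_div]
    congr 1
    refine Finset.sum_congr rfl fun x _ => ?_
    rw [← Real.rpow_mul (xMm_nonneg _ _ _)]
    congr 1; field_simp

open MeasureTheory in
lemma x_I1 {s t : ℝ} (hs : -1 < s) (ht : 0 ≤ t) :
    IntegrableOn (fun l : ℝ => if l < t then l ^ s else 0) (Set.Ioi 0) ∧
    ∫ l in Set.Ioi (0:ℝ), (if l < t then l ^ s else 0) = t ^ (s + 1) / (s + 1) := by
  have e : (fun l : ℝ => if l < t then l ^ s else 0) = Set.indicator (Set.Iio t) (fun l => l ^ s) := by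
    ext l; simp [Set.indicator]
  have e2 : Set.Ioi (0:ℝ) ∩ Set.Iio t = Set.Ioo 0 t := by ext; simp
  have hi : IntegrableOn (fun l : ℝ => l ^ s) (Set.Ioo 0 t) := by
    have := (intervalIntegral.intervalIntegrable_rpow' hs (a := 0) (b := t))
    rw [intervalIntegrable_iff_integrableOn_Ioo_of_le ht] at this
    exact this
  constructor
  · rw [e, integrableOn_indicator_iff measurableSet_Iio, Set.inter_comm, e2]; exact hi
  · rw [e, setIntegral_indicator measurableSet_Iio, e2, ← integral_Ioc_eq_integral_Ioo,
      ← intervalIntegral.integral_of_le ht, integral_rpow (Or.inl hs), Real.zero_rpow (by linarith)]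
    simp

open MeasureTheory in
lemma x_I2 {s t : ℝ} (hs : s < -1) (ht : 0 < t) :
    IntegrableOn (fun l : ℝ => if t ≤ l then l ^ s else 0) (Set.Ioi 0) ∧
    ∫ l in Set.Ioi (0:ℝ), (if t ≤ l then l ^ s else 0) = - t ^ (s + 1) / (s + 1) := by
  have e : (fun l : ℝ => if t ≤ l then l ^ s else 0) = Set.indicator (Set.Ici t) (fun l => l ^ s) := by
    ext l; simp [Set.indicator]
  have e2 : Set.Ioi (0:ℝ) ∩ Set.Ici t = Set.Ici t := by
    ext x; simp only [Set.mem_inter_iff, Set.mem_Ioi, Set.mem_Ici, and_iff_right_iff_imp]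
    intro h; linarith
  constructor
  · rw [e, integrableOn_indicator_iff measurableSet_Ici, Set.inter_comm, e2,
      integrableOn_Ici_iff_integrableOn_Ioi]
    exact integrableOn_Ioi_rpow_of_lt hs ht
  · rw [e, setIntegral_indicator measurableSet_Ici, e2, integral_Ici_eq_integral_Ioi,
      integral_Ioi_rpow_of_lt hs ht]

lemma x_cheb {u v l : ℝ} (hu : 0 ≤ u) (hv : 0 ≤ v) (hl : 0 < l) (h : l < u + v) :
    1 ≤ 2 * u / l + 4 * v ^ 2 / l ^ 2 := by
  rcases le_total (l / 2) u with h1 | h1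
  · have : 1 ≤ 2 * u / l := by rw [le_div_iff₀ hl]; linarith
    have : 0 ≤ 4 * v ^ 2 / l ^ 2 := by positivity
    linarith
  · have : 1 ≤ 4 * v ^ 2 / l ^ 2 := by rw [le_div_iff₀ (by positivity)]; nlinarith
    have : 0 ≤ 2 * u / l := by positivity
    linarith

open MeasureTheory in
lemma x_interp {X : Type*} [Fintype X] {p A E : ℝ} (hp : 1 < p) (hp2 : p < 2) (hA : 0 ≤ A)
    (hE : 0 < E) (R : (X → ℂ) → (X → ℂ)) (hadd : ∀ f g x, R (f + g) x = R f x + R g x)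
    (h1 : ∀ f, ∑ x, ‖R f x‖ ≤ A * ∑ x, ‖f x‖) (h2 : ∀ f, ∑ x, ‖R f x‖ ^ 2 ≤ E * ∑ x, ‖f x‖ ^ 2)
    (f : X → ℂ) :
    ∑ x, ‖R f x‖ ^ p ≤ (2 * A * p / (p - 1) + 4 * p / (2 - p)) * E ^ (p - 1) * ∑ x, ‖f x‖ ^ p := by
  have hpw : ∀ l ∈ Set.Ioi (0:ℝ), ∑ x, (if l < ‖R f x‖ then l ^ (p - 1) else 0) ≤
      2 * A * ∑ y, ‖f y‖ * (if l < ‖f y‖ * E then l ^ (p - 2) else 0) +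
      4 * E * ∑ y, ‖f y‖ ^ 2 * (if ‖f y‖ * E ≤ l then l ^ (p - 3) else 0) := by
    intro l hl
    have hl : 0 < l := hl
    set g : X → ℂ := fun y => if l < ‖f y‖ * E then f y else 0 with hg
    set h : X → ℂ := fun y => if ‖f y‖ * E ≤ l then f y else 0 with hh
    have hf : f = g + h := by
      ext y
      simp only [hg, hh, Pi.add_apply]
      rcases lt_or_ge l (‖f y‖ * E) with h | h
      · simp [h, not_le.mpr h]
      · simp [h, not_lt.mpr h]
    have e1 : l ^ (p - 2) = l ^ (p - 1) / l := by
      rw [show p - 2 = (p - 1) - 1 by ring, Real.rpow_sub_one hl.ne']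
    have e2 : l ^ (p - 3) = l ^ (p - 1) / l ^ 2 := by
      rw [show p - 3 = (p - 1) - 1 - 1 by ring, Real.rpow_sub_one hl.ne', Real.rpow_sub_one hl.ne']
      field_simp
    calc ∑ x, (if l < ‖R f x‖ then l ^ (p - 1) else 0)
        ≤ ∑ x, (2 * (l ^ (p - 1) / l) * ‖R g x‖ + 4 * (l ^ (p - 1) / l ^ 2) * ‖R h x‖ ^ 2) := by
          refine Finset.sum_le_sum fun x _ => ?_
          split_ifs with hx
          · have : ‖R f x‖ ≤ ‖R g x‖ + ‖R h x‖ := by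
              nth_rewrite 1 [hf]; rw [hadd]; exact norm_add_le _ _
            have := x_cheb (norm_nonneg (R g x)) (norm_nonneg (R h x)) hl (hx.trans_le this)
            have h3 : 0 ≤ l ^ (p - 1) := by positivity
            calc l ^ (p - 1) = l ^ (p - 1) * 1 := by ring
              _ ≤ l ^ (p - 1) * _ := mul_le_mul_of_nonneg_left this h3
              _ = _ := by ring
          · positivity
      _ = 2 * (l ^ (p - 1) / l) * ∑ x, ‖R g x‖ + 4 * (l ^ (p - 1) / l ^ 2) * ∑ x, ‖R h x‖ ^ 2 := by
          rw [Finset.sum_add_distrib, Finset.mul_sum, Finset.mul_sum]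
      _ ≤ 2 * (l ^ (p - 1) / l) * (A * ∑ x, ‖g x‖) + 4 * (l ^ (p - 1) / l ^ 2) * (E * ∑ x, ‖h x‖ ^ 2) := by
          have := h1 g
          have := h2 h
          gcongr
      _ = _ := by
          rw [e1, e2]
          congr 1
          · simp only [Finset.mul_sum]
            refine Finset.sum_congr rfl fun y _ => ?_
            simp only [hg]; split_ifs <;> first | ring1 | simp
          · simp only [Finset.mul_sum]
            refine Finset.sum_congr rfl fun y _ => ?_
            simp only [hh]; split_ifs <;> first | ring1 | simp
  have J1 : ∀ a : ℝ, 0 ≤ a → IntegrableOn (fun l : ℝ => a * (if l < a * E then l ^ (p - 2) else 0)) (Set.Ioi 0) ∧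
      ∫ l in Set.Ioi (0:ℝ), a * (if l < a * E then l ^ (p - 2) else 0) = a ^ p * E ^ (p - 1) / (p - 1) := by
    intro a ha
    obtain ⟨i1, i2⟩ := x_I1 (s := p - 2) (t := a * E) (by linarith) (by positivity)
    refine ⟨i1.const_mul a, ?_⟩
    rw [integral_const_mul, i2, show p - 2 + 1 = p - 1 by ring, Real.mul_rpow ha hE.le]
    rcases ha.eq_or_lt with h | h
    · simp [← h, Real.zero_rpow (show p ≠ 0 by linarith)]
    · rw [Real.rpow_sub_one h.ne' p]; field_simp
  have J2 : ∀ a : ℝ, 0 ≤ a → IntegrableOn (fun l : ℝ => a ^ 2 * (if a * E ≤ l then l ^ (p - 3) else 0)) (Set.Ioi 0) ∧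
      ∫ l in Set.Ioi (0:ℝ), a ^ 2 * (if a * E ≤ l then l ^ (p - 3) else 0) = a ^ p * E ^ (p - 2) / (2 - p) := by
    intro a ha
    rcases ha.eq_or_lt with h | h
    · simp [← h, Real.zero_rpow (show p ≠ 0 by linarith)]
    obtain ⟨i1, i2⟩ := x_I2 (s := p - 3) (t := a * E) (by linarith) (by positivity)
    refine ⟨i1.const_mul _, ?_⟩
    rw [integral_const_mul, i2, show p - 3 + 1 = p - 2 by ring, Real.mul_rpow ha hE.le]
    have : a ^ (p - 2) = a ^ p / a ^ 2 := by
      rw [show p - 2 = p - 1 - 1 by ring, Real.rpow_sub_one h.ne', Real.rpow_sub_one h.ne']; field_simp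
    rw [this]
    have h3 : p - 2 ≠ 0 := by linarith
    have h4 : 2 - p ≠ 0 := by linarith
    field_simp
    ring
  have J0 : ∀ x, _ := fun x => x_I1 (s := p - 1) (t := ‖R f x‖) (by linarith) (norm_nonneg _)
  have I1 : IntegrableOn (fun l : ℝ => 2 * A * ∑ y, ‖f y‖ * (if l < ‖f y‖ * E then l ^ (p - 2) else 0)) (Set.Ioi 0) :=
    Integrable.const_mul (integrable_finsetSum _ fun y _ => (J1 _ (norm_nonneg (f y))).1) _
  have I2 : IntegrableOn (fun l : ℝ => 4 * E * ∑ y, ‖f y‖ ^ 2 * (if ‖f y‖ * E ≤ l then l ^ (p - 3) else 0)) (Set.Ioi 0) :=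
    Integrable.const_mul (integrable_finsetSum _ fun y _ => (J2 _ (norm_nonneg (f y))).1) _
  have main := setIntegral_mono_on (integrable_finsetSum _ fun x _ => (J0 x).1) (I1.add I2) measurableSet_Ioi hpw
  have hR : ∫ l in Set.Ioi (0:ℝ), ((2 * A * ∑ y, ‖f y‖ * (if l < ‖f y‖ * E then l ^ (p - 2) else 0)) +
      4 * E * ∑ y, ‖f y‖ ^ 2 * (if ‖f y‖ * E ≤ l then l ^ (p - 3) else 0)) =
      2 * A * ∑ y, (‖f y‖ ^ p * E ^ (p - 1) / (p - 1)) + 4 * E * ∑ y, (‖f y‖ ^ p * E ^ (p - 2) / (2 - p)) := by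
    rw [integral_add I1 I2, integral_const_mul, integral_const_mul, integral_finsetSum, integral_finsetSum]
    · congr 2
      · exact Finset.sum_congr rfl fun y _ => (J1 _ (norm_nonneg (f y))).2
      · exact Finset.sum_congr rfl fun y _ => (J2 _ (norm_nonneg (f y))).2
    · exact fun y _ => (J2 _ (norm_nonneg (f y))).1
    · exact fun y _ => (J1 _ (norm_nonneg (f y))).1
  have hL : ∫ l in Set.Ioi (0:ℝ), ∑ x, (if l < ‖R f x‖ then l ^ (p - 1) else 0) = ∑ x, ‖R f x‖ ^ p / p := by
    rw [integral_finsetSum]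
    · refine Finset.sum_congr rfl fun x _ => ?_
      rw [(J0 x).2]; simp
    · exact fun x _ => (J0 x).1
  have main2 := hL.symm.le.trans (main.trans hR.le)
  have hE2 : E ^ (p - 2) = E ^ (p - 1) / E := by
    rw [show p - 2 = (p - 1) - 1 by ring, Real.rpow_sub_one hE.ne']
  simp only [← Finset.sum_div, ← Finset.sum_mul] at main2
  rw [div_le_iff₀ (by linarith), hE2] at main2
  refine main2.trans (le_of_eq ?_)
  have h3 : p - 1 ≠ 0 := by linarith
  have h4 : 2 - p ≠ 0 := by linarith
  field_simp

/-- smoothing remainder operator -/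
def xT {V : Type*} [AddCommGroup V] [Module ℝ V] (w : ℕ) (φ : ℕ → V) (n : ℕ) : V :=
  φ (n + 2 * w) - (w : ℝ)⁻¹ • ∑ j ∈ range w, φ (n + j)

lemma xT_map {V W : Type*} [AddCommGroup V] [Module ℝ V] [AddCommGroup W] [Module ℝ W]
    (L : V →ₗ[ℝ] W) (w M : ℕ) (φ : ℕ → V) (n : ℕ) :
    L ((xT w)^[M] φ n) = (xT w)^[M] (fun l => L (φ l)) n := by
  induction M generalizing φ with
  | zero => simp
  | succ M ih =>
    rw [Function.iterate_succ_apply, Function.iterate_succ_apply, ih]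
    have : (fun l => L (xT w φ l)) = xT w (fun l => L (φ l)) := by
      ext l; simp [xT]
    rw [this]

lemma xT_approx {V : Type*} [NormedAddCommGroup V] [NormedSpace ℝ V] (w M : ℕ) (φ : ℕ → V) (n : ℕ) :
    ‖φ (n + 2 * M * w) - (xT w)^[M] φ n‖ ≤
      ((2 ^ M - 1) / w) * ∑ l ∈ range (2 * M * w - w), ‖φ (n + l)‖ := by
  induction M generalizing n with
  | zero => simp
  | succ M ih =>
    rw [Function.iterate_succ_apply']
    set ψ := (xT w)^[M] φ with hψ
    set S := ∑ l ∈ range (2 * (M + 1) * w - w), ‖φ (n + l)‖ with hS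
    have hc : (0:ℝ) ≤ (2 ^ M - 1) / w := by
      apply div_nonneg _ (by positivity)
      have : (1:ℝ) ≤ 2 ^ M := one_le_pow₀ (by norm_num)
      linarith
    have sub : ∀ a b : ℕ, a + b ≤ 2 * (M + 1) * w - w → ∑ l ∈ range b, ‖φ (n + a + l)‖ ≤ S := by
      intro a b hab
      have : ∑ l ∈ range b, ‖φ (n + a + l)‖ = ∑ l ∈ Ico a (a + b), ‖φ (n + l)‖ := by
        rw [Finset.sum_Ico_eq_sum_range]; simp [add_assoc]
      rw [this, hS]
      apply Finset.sum_le_sum_of_subset_of_nonneg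
      · intro l hl; simp at hl ⊢; omega
      · intros; positivity
    have hM1 : 2 * (M + 1) * w = 2 * M * w + 2 * w := by ring
    have e : φ (n + 2 * (M + 1) * w) - xT w ψ n =
        (φ (n + 2 * w + 2 * M * w) - ψ (n + 2 * w)) + (w : ℝ)⁻¹ • ∑ j ∈ range w, ψ (n + j) := by
      simp only [xT]
      rw [show n + 2 * (M + 1) * w = n + 2 * w + 2 * M * w by ring]
      abel
    have b1 : ‖φ (n + 2 * w + 2 * M * w) - ψ (n + 2 * w)‖ ≤ (2 ^ M - 1) / w * S := by
      refine (ih (n + 2 * w)).trans ?_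
      rcases Nat.eq_zero_or_pos M with h0 | h0
      · subst h0; simp
      have : w ≤ 2 * M * w := by nlinarith
      exact mul_le_mul_of_nonneg_left (sub _ _ (by omega)) hc
    have b2 : ‖∑ j ∈ range w, ψ (n + j)‖ ≤ S + w * ((2 ^ M - 1) / w * S) := by
      calc ‖∑ j ∈ range w, ψ (n + j)‖ ≤ ∑ j ∈ range w, ‖ψ (n + j)‖ := norm_sum_le _ _
        _ ≤ ∑ j ∈ range w, (‖φ (n + j + 2 * M * w)‖ + (2 ^ M - 1) / w * S) := by
          refine Finset.sum_le_sum fun j hj => ?_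
          have hj := Finset.mem_range.mp hj
          have h3 := (ih (n + j)).trans (mul_le_mul_of_nonneg_left (sub j (2 * M * w - w) (by
            rcases Nat.eq_zero_or_pos M with h0 | h0
            · subst h0; simp; omega
            have : w ≤ 2 * M * w := by nlinarith
            omega)) hc)
          have h4 := norm_sub_norm_le (ψ (n + j)) (φ (n + j + 2 * M * w))
          rw [norm_sub_rev] at h4
          linarith
        _ = ∑ j ∈ range w, ‖φ (n + 2 * M * w + j)‖ + w * ((2 ^ M - 1) / w * S) := by
          rw [Finset.sum_add_distrib]; simp [add_right_comm]
        _ ≤ _ := by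
          have := sub (2 * M * w) w (by omega)
          linarith
    rw [e]
    refine (norm_add_le _ _).trans ?_
    rw [norm_smul]
    have hS0 : 0 ≤ S := by positivity
    rcases Nat.eq_zero_or_pos w with h0 | h0
    · subst h0; simp at b1 ⊢; simpa using b1
    have hw : (0:ℝ) < w := by exact_mod_cast h0
    have : ‖(w:ℝ)⁻¹‖ = 1 / w := by rw [Real.norm_of_nonneg (by positivity)]; simp
    rw [this]
    calc _ ≤ (2 ^ M - 1) / w * S + 1 / w * (S + w * ((2 ^ M - 1) / w * S)) := by gcongr
      _ = _ := by field_simp; ring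

lemma xT_comm {V : Type*} [AddCommGroup V] [Module ℝ V] (w : ℕ) (φ : ℕ → V) :
    fwdDiff 1 (xT w φ) = xT w (fwdDiff 1 φ) := by
  ext n
  simp only [fwdDiff, xT, Finset.sum_sub_distrib, smul_sub]
  simp only [add_right_comm _ _ 1]
  abel

lemma xT_comm_iter {V : Type*} [AddCommGroup V] [Module ℝ V] (w M : ℕ) (φ : ℕ → V) :
    (fwdDiff 1)^[M] (xT w φ) = xT w ((fwdDiff 1)^[M] φ) := by
  induction M generalizing φ with
  | zero => simp
  | succ M ih => rw [Function.iterate_succ_apply, Function.iterate_succ_apply, xT_comm, ih]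

lemma xT_one {V : Type*} [NormedAddCommGroup V] [NormedSpace ℝ V] (w : ℕ) (φ : ℕ → V) (n : ℕ) (hw : 0 < w)
    (D : ℝ) (h : ∀ i ≤ 2 * w, ‖fwdDiff 1 φ (n + i)‖ ≤ D) : ‖xT w φ n‖ ≤ 2 * w * D := by
  have hw' : (0:ℝ) < w := by exact_mod_cast hw
  have hD : 0 ≤ D := (norm_nonneg _).trans (h 0 (by omega))
  have e : xT w φ n = (w : ℝ)⁻¹ • ∑ j ∈ range w, (φ (n + 2 * w) - φ (n + j)) := by
    rw [xT, Finset.sum_sub_distrib, smul_sub]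
    simp only [sum_const, card_range]
    rw [← Nat.cast_smul_eq_nsmul ℝ, smul_smul, inv_mul_cancel₀ hw'.ne', one_smul]
  have b : ∀ j ∈ range w, ‖φ (n + 2 * w) - φ (n + j)‖ ≤ 2 * w * D := by
    intro j hj
    have hj := Finset.mem_range.mp hj
    have : φ (n + 2 * w) - φ (n + j) = ∑ u ∈ Ico j (2 * w), (φ (n + (u + 1)) - φ (n + u)) := by
      rw [Finset.sum_Ico_sub (fun u => φ (n + u)) (by omega)]
    rw [this]
    refine (norm_sum_le _ _).trans ?_
    calc _ ≤ ∑ u ∈ Ico j (2 * w), D := by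
          refine Finset.sum_le_sum fun u hu => ?_
          simp at hu
          have := h u (by omega)
          simpa [fwdDiff, add_assoc] using this
      _ ≤ _ := by
          simp only [sum_const, Nat.card_Ico, nsmul_eq_mul]
          gcongr
          calc ((2 * w - j : ℕ) : ℝ) ≤ ((2 * w : ℕ) : ℝ) := by exact_mod_cast Nat.sub_le _ _
            _ = _ := by push_cast; ring
  rw [e, norm_smul, Real.norm_of_nonneg (by positivity)]
  calc _ ≤ (w:ℝ)⁻¹ * ∑ j ∈ range w, (2 * w * D) := by
        gcongr
        exact (norm_sum_le _ _).trans (Finset.sum_le_sum b)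
    _ = _ := by simp; field_simp

lemma xT_small {V : Type*} [NormedAddCommGroup V] [NormedSpace ℝ V] (w M : ℕ) (φ : ℕ → V) (n : ℕ) (hw : 0 < w)
    (D : ℝ) (h : ∀ i ≤ 2 * M * w, ‖(fwdDiff 1)^[M] φ (n + i)‖ ≤ D) :
    ‖(xT w)^[M] φ n‖ ≤ (2 * w) ^ M * D := by
  induction M generalizing φ D with
  | zero => simpa using h 0 (by omega)
  | succ M ih =>
    rw [Function.iterate_succ_apply]
    have := ih (xT w φ) (2 * w * D) (by
      intro i hi
      rw [xT_comm_iter]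
      apply xT_one w _ _ hw
      intro u hu
      have := h (i + u) (by nlinarith)
      rw [Function.iterate_succ_apply'] at this
      rwa [add_assoc])
    refine this.trans (le_of_eq ?_)
    ring

lemma x_perm {N : ℕ} (I J I' J' : Finset (Fin N)) (hd : Disjoint I J) (hd' : Disjoint I' J')
    (hI : I.card = I'.card) (hJ : J.card = J'.card) :
    ∃ ρ : Equiv.Perm (Fin N), (∀ i, ρ i ∈ I' ↔ i ∈ I) ∧ (∀ i, ρ i ∈ J' ↔ i ∈ J) := by
  classical
  have key : ∀ I J : Finset (Fin N), Disjoint I J → ∃ c : Fin N → Fin 3,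
      (∀ i, c i = 0 ↔ i ∈ I) ∧ (∀ i, c i = 1 ↔ i ∈ J) ∧ (∀ i, c i = 2 ↔ i ∈ (I ∪ J)ᶜ) := by
    intro I J hd
    refine ⟨fun i => if i ∈ I then 0 else if i ∈ J then 1 else 2, ?_, ?_, ?_⟩
    · intro i; by_cases h : i ∈ I <;> by_cases h2 : i ∈ J <;> simp [h, h2]
    · intro i; by_cases h : i ∈ I <;> by_cases h2 : i ∈ J <;> simp [h, h2]
      exact (Finset.disjoint_left.mp hd h h2).elim
    · intro i; by_cases h : i ∈ I <;> by_cases h2 : i ∈ J <;> simp [h, h2]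
  obtain ⟨c, c0, c1, c2⟩ := key I J hd
  obtain ⟨c', c0', c1', c2'⟩ := key I' J' hd'
  have hcard : ∀ y, Fintype.card {x // c x = y} = Fintype.card {x // c' x = y} := by
    intro y
    fin_cases y
    · simp only [Fin.zero_eta, c0, c0']; simpa using hI
    · simp only [Fin.mk_one, c1, c1']; simpa using hJ
    · simp only [Fin.reduceFinMk, c2, c2']
      rw [Fintype.card_coe, Fintype.card_coe, Finset.card_compl, Finset.card_compl,
        Finset.card_union_of_disjoint hd, Finset.card_union_of_disjoint hd', hI, hJ]
  let ρ : Equiv.Perm (Fin N) := (Equiv.sigmaFiberEquiv c).symm.trans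
    ((Equiv.sigmaCongrRight fun y => Fintype.equivOfCardEq (hcard y)).trans (Equiv.sigmaFiberEquiv c'))
  have hρ : ∀ i, c' (ρ i) = c i := by
    intro i
    simp only [ρ, Equiv.trans_apply]
    exact ((Fintype.equivOfCardEq (hcard (c i))) ⟨i, rfl⟩).2
  refine ⟨ρ, fun i => ?_, fun i => ?_⟩
  · rw [← c0', ← c0, hρ]
  · rw [← c1', ← c1, hρ]

def xg {N : ℕ} (a : Fin N → ℂ) (I J : Finset (Fin N)) : ℂ :=
  ∑ π : Equiv.Perm (Fin N), (∏ i ∈ I, a (π i)) * ∏ j ∈ J, (a (π j) - 1)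

lemma xg_sym {N : ℕ} (a : Fin N → ℂ) (I J I' J' : Finset (Fin N)) (hd : Disjoint I J) (hd' : Disjoint I' J')
    (hI : I.card = I'.card) (hJ : J.card = J'.card) : xg a I J = xg a I' J' := by
  obtain ⟨ρ, h1, h2⟩ := x_perm I J I' J' hd hd' hI hJ
  unfold xg
  rw [← Equiv.sum_comp (Equiv.mulRight ρ)]
  refine Finset.sum_congr rfl fun π _ => ?_
  congr 1
  · refine Finset.prod_bij (fun i _ => ρ i) ?_ ?_ ?_ ?_
    · intro i hi; exact (h1 i).2 hi
    · intro i _ j _ h; exact ρ.injective h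
    · intro i hi; refine ⟨ρ.symm i, ?_, by simp⟩; rw [← h1]; simpa using hi
    · intro i _; simp
  · refine Finset.prod_bij (fun i _ => ρ i) ?_ ?_ ?_ ?_
    · intro i hi; exact (h2 i).2 hi
    · intro i _ j _ h; exact ρ.injective h
    · intro i hi; refine ⟨ρ.symm i, ?_, by simp⟩; rw [← h2]; simpa using hi
    · intro i _; simp

def xIv (N a b : ℕ) : Finset (Fin N) := univ.filter fun i => a ≤ i.val ∧ i.val < b

lemma xIv_card {N a b : ℕ} (hb : b ≤ N) : (xIv N a b).card = b - a := by
  rw [← Nat.card_Ico a b]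
  refine Finset.card_bij (fun i _ => i.val) ?_ ?_ ?_
  · intro i hi; simpa [xIv] using hi
  · intro i _ j _ h; exact Fin.ext h
  · intro i hi; simp at hi; exact ⟨⟨i, by omega⟩, by simp [xIv, hi], rfl⟩

def xD {N : ℕ} (a : Fin N → ℂ) (M k : ℕ) : ℂ :=
  (N.factorial : ℂ)⁻¹ * xg a (xIv N 0 k) (xIv N k (k + M))

lemma xIv_disj (N a b c : ℕ) : Disjoint (xIv N a b) (xIv N b c) := by
  rw [Finset.disjoint_left]; intro i; simp [xIv]; omega

lemma xD_succ {N : ℕ} (a : Fin N → ℂ) (M k : ℕ) (h : k + M + 1 ≤ N) :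
    xD a (M + 1) k = xD a M (k + 1) - xD a M k := by
  unfold xD
  rw [← mul_sub]
  congr 1
  have h1 : xg a (xIv N 0 k) (xIv N k (k + M)) = xg a (xIv N 0 k) (xIv N (k + 1) (k + 1 + M)) := by
    apply xg_sym
    · exact xIv_disj _ _ _ _
    · rw [Finset.disjoint_left]; intro i; simp [xIv]; omega
    · rfl
    · rw [xIv_card (by omega), xIv_card (by omega)]; omega
  rw [h1]
  unfold xg
  rw [← Finset.sum_sub_distrib]
  refine Finset.sum_congr rfl fun π _ => ?_
  have e1 : xIv N 0 (k + 1) = insert (⟨k, by omega⟩ : Fin N) (xIv N 0 k) := by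
    ext i; simp [xIv, Fin.ext_iff]; omega
  have e2 : xIv N k (k + (M + 1)) = insert (⟨k, by omega⟩ : Fin N) (xIv N (k + 1) (k + 1 + M)) := by
    ext i; simp [xIv, Fin.ext_iff]; omega
  rw [e1, e2, Finset.prod_insert (by simp [xIv]), Finset.prod_insert (by simp [xIv])]
  ring

lemma xD_fwd {N : ℕ} (a : Fin N → ℂ) (M k : ℕ) (h : k + M ≤ N) :
    (fwdDiff 1)^[M] (xD a 0) k = xD a M k := by
  induction M generalizing k with
  | zero => simp
  | succ M ih =>
    rw [Function.iterate_succ_apply', fwdDiff, ih _ (by omega), ih _ (by omega), xD_succ _ _ _ (by omega)]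

lemma xD_bound {N m : ℕ} (hm : 2 ≤ m) (a : Fin N → ℂ) (ha : ∀ i, a i = 1 ∨ a i = -1 / m) (M k : ℕ)
    (h : k + M ≤ N) : ‖xD a M k‖ ≤ (m + 1) ^ M / (k + M).choose M := by
  classical
  set T := xIv N 0 (k + M) with hT
  have hm0 : (0:ℝ) < m := by positivity
  have hTc : T.card = k + M := by rw [hT, xIv_card h]; simp
  have sym : ∀ J ∈ powersetCard M T, xg a (xIv N 0 k) (xIv N k (k + M)) = xg a (T \ J) J := by
    intro J hJ
    rw [mem_powersetCard] at hJ
    apply xg_sym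
    · exact xIv_disj _ _ _ _
    · exact Finset.sdiff_disjoint
    · rw [xIv_card (by omega), Finset.card_sdiff_of_subset hJ.1, hTc, hJ.2]; omega
    · rw [xIv_card h, hJ.2]; omega
  have b1 : ((k + M).choose M : ℝ) * ‖xg a (xIv N 0 k) (xIv N k (k + M))‖ ≤ N.factorial * (m + 1) ^ M := by
    calc ((k + M).choose M : ℝ) * ‖xg a (xIv N 0 k) (xIv N k (k + M))‖
        = ∑ J ∈ powersetCard M T, ‖xg a (xIv N 0 k) (xIv N k (k + M))‖ := by
          rw [Finset.sum_const, card_powersetCard, hTc, nsmul_eq_mul]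
      _ = ∑ J ∈ powersetCard M T, ‖xg a (T \ J) J‖ := Finset.sum_congr rfl fun J hJ => by rw [sym J hJ]
      _ ≤ ∑ J ∈ powersetCard M T, ∑ π : Equiv.Perm (Fin N),
            (∏ i ∈ T \ J, ‖a (π i)‖) * ∏ j ∈ J, ‖a (π j) - 1‖ := by
          refine Finset.sum_le_sum fun J _ => ?_
          refine (norm_sum_le _ _).trans (le_of_eq ?_)
          simp [norm_prod]
      _ = ∑ π : Equiv.Perm (Fin N), ∑ J ∈ powersetCard M T,
            (∏ i ∈ T \ J, ‖a (π i)‖) * ∏ j ∈ J, ‖a (π j) - 1‖ := Finset.sum_comm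
      _ ≤ ∑ π : Equiv.Perm (Fin N), ((m:ℝ) + 1) ^ M := by
          refine Finset.sum_le_sum fun π _ => ?_
          calc ∑ J ∈ powersetCard M T, (∏ i ∈ T \ J, ‖a (π i)‖) * ∏ j ∈ J, ‖a (π j) - 1‖
              = ∑ J ∈ powersetCard M T, ((m:ℝ) + 1) ^ M *
                ((∏ j ∈ J, (‖a (π j) - 1‖ / (m + 1))) * (∏ i ∈ T \ J, ‖a (π i)‖)) := by
                refine Finset.sum_congr rfl fun J hJ => ?_
                rw [mem_powersetCard] at hJ
                rw [Finset.prod_div_distrib, Finset.prod_const, hJ.2]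
                field_simp
            _ ≤ ((m:ℝ) + 1) ^ M * ∑ J ∈ T.powerset, 
                ((∏ j ∈ J, (‖a (π j) - 1‖ / (m + 1))) * (∏ i ∈ T \ J, ‖a (π i)‖)) := by
                rw [← Finset.mul_sum]
                gcongr
                intro J hJ
                rw [mem_powersetCard] at hJ
                exact mem_powerset.mpr hJ.1
            _ = ((m:ℝ) + 1) ^ M * ∏ i ∈ T, (‖a (π i) - 1‖ / (m + 1) + ‖a (π i)‖) := by
                rw [Finset.prod_add]
            _ ≤ ((m:ℝ) + 1) ^ M * 1 := by
                gcongr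
                apply Finset.prod_le_one
                · intros; positivity
                · intro i _
                  rcases ha (π i) with h | h
                  · simp [h]
                  · have e1 : ‖a (π i) - 1‖ = (m + 1) / m := by
                      rw [h, show (-1 / (m:ℂ) - 1) = -(((m + 1) / m : ℝ) : ℂ) by
                        push_cast; have : (m:ℂ) ≠ 0 := by exact_mod_cast hm0.ne'
                        field_simp; ring]
                      rw [norm_neg, Complex.norm_real, Real.norm_of_nonneg (by positivity)]
                    have e2 : ‖a (π i)‖ = 1 / m := by rw [h]; simp
                    rw [e1, e2]
                    have : (2:ℝ) ≤ m := by exact_mod_cast hm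
                    field_simp; linarith
            _ = _ := by ring
      _ = _ := by simp [Fintype.card_perm]
  have hc : (0:ℝ) < (k + M).choose M := by exact_mod_cast Nat.choose_pos (by omega)
  have hN : (0:ℝ) < N.factorial := by exact_mod_cast Nat.factorial_pos N
  unfold xD
  rw [norm_mul, norm_inv, Complex.norm_natCast, le_div_iff₀ hc, inv_mul_eq_div, div_mul_eq_mul_div, div_le_iff₀ hN]
  linarith

lemma xD_zero {N : ℕ} (a : Fin N → ℂ) (k : ℕ) (h : k ≤ N) :
    (N.choose k : ℂ) * xD a 0 k = ∑ S ∈ powersetCard k univ, ∏ i ∈ S, a i := by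
  classical
  have hN : (N.factorial : ℂ) ≠ 0 := by exact_mod_cast Nat.factorial_ne_zero N
  have b1 : (N.choose k : ℂ) * xg a (xIv N 0 k) (xIv N k (k + 0)) =
      N.factorial * ∑ S ∈ powersetCard k univ, ∏ i ∈ S, a i := by
    calc (N.choose k : ℂ) * xg a (xIv N 0 k) (xIv N k (k + 0))
      = ∑ S ∈ powersetCard k (univ : Finset (Fin N)), xg a (xIv N 0 k) (xIv N k (k + 0)) := by
          rw [Finset.sum_const, card_powersetCard, nsmul_eq_mul]; simp
      _ = ∑ S ∈ powersetCard k (univ : Finset (Fin N)), xg a S ∅ := by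
          refine Finset.sum_congr rfl fun S hS => ?_
          apply xg_sym
          · exact xIv_disj _ _ _ _
          · simp
          · rw [xIv_card h, (mem_powersetCard.mp hS).2]; simp
          · rw [xIv_card (by omega)]; simp
      _ = ∑ π : Equiv.Perm (Fin N), ∑ S ∈ powersetCard k (univ : Finset (Fin N)), ∏ i ∈ S, a (π i) := by
          simp only [xg, Finset.prod_empty, mul_one]; exact Finset.sum_comm
      _ = ∑ π : Equiv.Perm (Fin N), ∑ S ∈ powersetCard k (univ : Finset (Fin N)), ∏ i ∈ S, a i := by
          refine Finset.sum_congr rfl fun π _ => ?_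
          refine Finset.sum_bij (fun S _ => S.map π.toEmbedding) ?_ ?_ ?_ ?_
          · intro S hS; simpa [mem_powersetCard] using hS
          · intro S _ S' _ h; exact Finset.map_injective _ h
          · intro S hS; refine ⟨S.map π.symm.toEmbedding, ?_, ?_⟩
            · simpa [mem_powersetCard] using hS
            · ext i; simp
          · intro S _; simp
      _ = _ := by simp [Fintype.card_perm]
  unfold xD
  calc _ = (N.factorial : ℂ)⁻¹ * ((N.choose k : ℂ) * xg a (xIv N 0 k) (xIv N k (k + 0))) := by ring
    _ = _ := by rw [b1]; field_simp

lemma x_sph {m N : ℕ} {R : Type*} [CommRing R] (h : Fin N → ZMod (m + 1) → R) (h0 : ∀ i, h i 0 = 1) (k : ℕ) :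
    ∑ y ∈ (univ.filter fun y : Fin N → ZMod (m + 1) => hw y = k), ∏ i, h i (y i)
      = ∑ S ∈ powersetCard k (univ : Finset (Fin N)), ∏ i ∈ S, ∑ c ∈ univ.erase (0 : ZMod (m + 1)), h i c := by
  classical
  rw [← Finset.sum_fiberwise_of_maps_to (s := univ.filter fun y : Fin N → ZMod (m + 1) => hw y = k)
    (t := powersetCard k (univ : Finset (Fin N))) (g := fun y => univ.filter fun i => y i ≠ 0)]
  swap
  · intro y hy
    simp only [mem_filter, mem_univ, true_and] at hy
    simp only [mem_powersetCard, subset_univ, true_and]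
    exact hy
  refine Finset.sum_congr rfl fun S hS => ?_
  rw [mem_powersetCard] at hS
  have e : ∏ i ∈ S, ∑ c ∈ univ.erase (0 : ZMod (m + 1)), h i c
      = ∏ i, ∑ c ∈ (if i ∈ S then univ.erase (0 : ZMod (m + 1)) else {0}), h i c := by
    rw [← Finset.prod_subset (Finset.subset_univ S)]
    · refine Finset.prod_congr rfl fun i hi => ?_
      rw [if_pos hi]
    · intro i _ hi
      rw [if_neg hi]; simp [h0]
  rw [e, Finset.prod_univ_sum]
  refine Finset.sum_congr ?_ fun _ _ => rfl
  ext y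
  simp only [mem_filter, mem_univ, true_and, Fintype.mem_piFinset]
  constructor
  · rintro ⟨_, rfl⟩ i
    by_cases hi : y i = 0 <;> simp [hi]
  · intro hy
    have : (univ.filter fun i => y i ≠ 0) = S := by
      ext i
      have := hy i
      by_cases hi : i ∈ S <;> simp [hi] at this ⊢ <;> exact this
    refine ⟨?_, this⟩
    unfold hw
    rw [this]; exact hS.2

lemma x_sph_card (m N k : ℕ) :
    (univ.filter fun y : Fin N → ZMod (m + 1) => hw y = k).card = N.choose k * m ^ k := by
  have := x_sph (m := m) (N := N) (R := ℤ) (fun _ _ => 1) (fun _ => rfl) k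
  simp only [prod_const_one, sum_const, nsmul_eq_mul, mul_one, prod_const] at this
  rw [Finset.sum_congr rfl (g := fun _ => (m : ℤ) ^ k)] at this
  · simp only [sum_const, card_powersetCard, card_univ, Fintype.card_fin, nsmul_eq_mul] at this
    exact_mod_cast this
  · intro S hS
    rw [mem_powersetCard] at hS
    simp [hS.2, ZMod.card]

lemma x_sig (m N k : ℕ) (y : Fin N → ZMod (m + 1)) :
    sigmaC m N (k : ℤ) y = if hw y = k then ((N.choose k * m ^ k : ℕ) : ℂ)⁻¹ else 0 := by
  unfold sigmaC
  simp only [Nat.cast_inj, x_sph_card]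

lemma x_char_prod {m N : ℕ} (ψ : AddChar (Fin N → ZMod (m + 1)) ℂ) (y : Fin N → ZMod (m + 1)) :
    ψ y = ∏ i, ψ (Pi.single i (y i)) := by
  have key : ∀ (s : Finset (Fin N)), ψ (∑ i ∈ s, Pi.single i (y i)) = ∏ i ∈ s, ψ (Pi.single i (y i)) := by
    intro s
    classical
    induction s using Finset.induction_on with
    | empty => simp
    | insert a s ha ih => rw [Finset.sum_insert ha, Finset.prod_insert ha, AddChar.map_add_eq_mul, ih]
  rw [← key, Finset.univ_sum_single]

lemma x_char {m N : ℕ} (hm : 2 ≤ m) (ψ : AddChar (Fin N → ZMod (m + 1)) ℂ) :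
    ∃ a : Fin N → ℂ, (∀ i, a i = 1 ∨ a i = -1 / m) ∧ ∀ k ≤ N, ∑ y, sigmaC m N (k : ℤ) y * ψ y = xD a 0 k := by
  have hm0 : (m : ℂ) ≠ 0 := by
    have : m ≠ 0 := by omega
    exact_mod_cast this
  refine ⟨fun i => (∑ c ∈ univ.erase (0 : ZMod (m + 1)), ψ (Pi.single i c)) / m, ?_, ?_⟩
  · intro i
    have h1 : ∑ c ∈ univ.erase (0 : ZMod (m + 1)), ψ (Pi.single i c) = (∑ c, ψ (Pi.single i c)) - 1 := by
      rw [← Finset.sum_erase_add univ _ (mem_univ (0 : ZMod (m + 1)))]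
      simp
    have h2 := AddChar.sum_eq_ite (ψ.compAddMonoidHom (AddMonoidHom.single (fun _ : Fin N => ZMod (m + 1)) i))
    simp only [AddChar.compAddMonoidHom_apply, AddMonoidHom.single_apply, ZMod.card] at h2
    simp only [h1, h2]
    split_ifs
    · left; push_cast; field_simp; ring
    · right; simp
  · intro k hk
    have hc : (N.choose k : ℂ) ≠ 0 := by
      exact_mod_cast (Nat.choose_pos hk).ne'
    have h := x_sph (m := m) (N := N) (fun i c => ψ (Pi.single i c)) (by intro i; simp) k
    have hz := xD_zero (fun i => (∑ c ∈ univ.erase (0 : ZMod (m + 1)), ψ (Pi.single i c)) / m) k hk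
    have h3 : ∑ y, sigmaC m N (k : ℤ) y * ψ y = ((N.choose k * m ^ k : ℕ) : ℂ)⁻¹ *
        ∑ y ∈ (univ.filter fun y : Fin N → ZMod (m + 1) => hw y = k), ∏ i, ψ (Pi.single i (y i)) := by
      rw [Finset.mul_sum, Finset.sum_filter]
      refine Finset.sum_congr rfl fun y _ => ?_
      rw [x_sig, ← x_char_prod]
      split_ifs <;> simp
    rw [h3, h]
    have h4 : ∑ S ∈ powersetCard k (univ : Finset (Fin N)), ∏ i ∈ S, (∑ c ∈ univ.erase (0 : ZMod (m + 1)), ψ (Pi.single i c)) / (m:ℂ)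
        = (∑ S ∈ powersetCard k (univ : Finset (Fin N)), ∏ i ∈ S, ∑ c ∈ univ.erase (0 : ZMod (m + 1)), ψ (Pi.single i c)) / (m:ℂ)^k := by
      rw [Finset.sum_div]
      refine Finset.sum_congr rfl fun S hS => ?_
      rw [mem_powersetCard] at hS
      rw [Finset.prod_div_distrib, prod_const, hS.2]
    rw [h4] at hz
    apply mul_left_cancel₀ hc
    rw [hz]
    push_cast
    field_simp

lemma x_parseval {m N : ℕ} (u : (Fin N → ZMod (m + 1)) → ℂ) :
    ∑ ψ : AddChar (Fin N → ZMod (m + 1)) ℂ, ‖∑ y, u y * ψ y‖ ^ 2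
      = (Fintype.card (Fin N → ZMod (m + 1))) * ∑ y, ‖u y‖ ^ 2 := by
  have : ((∑ ψ : AddChar (Fin N → ZMod (m + 1)) ℂ, ‖∑ y, u y * ψ y‖ ^ 2 : ℝ) : ℂ)
      = (((Fintype.card (Fin N → ZMod (m + 1))) * ∑ y, ‖u y‖ ^ 2 : ℝ) : ℂ) := by
    push_cast
    simp only [← Complex.mul_conj', map_sum, map_mul]
    have e : ∀ ψ : AddChar (Fin N → ZMod (m + 1)) ℂ, (∑ y, u y * ψ y) * (∑ y, (starRingEnd ℂ) (u y) * (starRingEnd ℂ) (ψ y))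
        = ∑ y, ∑ z, (u y * (starRingEnd ℂ) (u z)) * ψ (y - z) := by
      intro ψ
      rw [Finset.sum_mul_sum]
      refine Finset.sum_congr rfl fun y _ => Finset.sum_congr rfl fun z _ => ?_
      rw [sub_eq_add_neg, AddChar.map_add_eq_mul, AddChar.map_neg_eq_conj]
      ring
    simp only [e]
    rw [Finset.sum_comm]
    rw [Finset.mul_sum]
    refine Finset.sum_congr rfl fun y _ => ?_
    rw [Finset.sum_comm]
    simp only [← Finset.mul_sum, AddChar.sum_apply_eq_ite, sub_eq_zero]
    simp
    ring
  exact_mod_cast this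

lemma x_l2 {m N : ℕ} (g : (Fin N → ZMod (m + 1)) → ℂ) (B : ℝ)
    (hB : ∀ ψ : AddChar (Fin N → ZMod (m + 1)) ℂ, ‖∑ y, g y * ψ y‖ ≤ B) (f : (Fin N → ZMod (m + 1)) → ℂ) :
    ∑ x, ‖convC g f x‖ ^ 2 ≤ B ^ 2 * ∑ x, ‖f x‖ ^ 2 := by
  have hcard : (0:ℝ) < Fintype.card (Fin N → ZMod (m + 1)) := by exact_mod_cast Fintype.card_pos
  have h1 := x_parseval (m := m) (N := N) (convC g f)
  have h2 := x_parseval (m := m) (N := N) f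
  have h3 : ∀ ψ : AddChar (Fin N → ZMod (m + 1)) ℂ, ∑ x, convC g f x * ψ x = (∑ y, g y * ψ y) * ∑ y, f y * ψ y := by
    intro ψ
    unfold convC
    simp only [Finset.sum_mul]
    rw [Finset.sum_comm]
    refine Finset.sum_congr rfl fun y _ => ?_
    rw [← Equiv.sum_comp (Equiv.addRight y), Finset.mul_sum]
    refine Finset.sum_congr rfl fun z _ => ?_
    simp only [Equiv.coe_addRight, add_sub_cancel_right, AddChar.map_add_eq_mul]
    ring
  have h4 : ∑ ψ : AddChar (Fin N → ZMod (m + 1)) ℂ, ‖∑ y, convC g f y * ψ y‖ ^ 2 ≤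
      B ^ 2 * ∑ ψ : AddChar (Fin N → ZMod (m + 1)) ℂ, ‖∑ y, f y * ψ y‖ ^ 2 := by
    rw [Finset.mul_sum]
    refine Finset.sum_le_sum fun ψ _ => ?_
    rw [h3, norm_mul, mul_pow]
    have := hB ψ
    gcongr
  rw [h1, h2] at h4
  have : (Fintype.card (Fin N → ZMod (m + 1)) : ℝ) * ∑ x, ‖convC g f x‖ ^ 2 ≤
    (Fintype.card (Fin N → ZMod (m + 1)) : ℝ) * (B ^ 2 * ∑ x, ‖f x‖ ^ 2) := by linarith
  exact le_of_mul_le_mul_left this hcard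

def xrho (m N M w k : ℕ) : (Fin N → ZMod (m + 1)) → ℂ :=
  (xT w)^[M] (fun l : ℕ => sigmaC m N (l : ℤ)) (k - 2 * M * w)

lemma x_sig_l1 (m N k : ℕ) : ∑ y, ‖sigmaC m N (k : ℤ) y‖ ≤ 1 := by
  have : ∑ y, ‖sigmaC m N (k : ℤ) y‖ = (N.choose k * m ^ k : ℕ) * ((N.choose k * m ^ k : ℕ) : ℝ)⁻¹ := by
    rw [← x_sph_card, ← nsmul_eq_mul, ← Finset.sum_const, Finset.sum_filter]
    refine Finset.sum_congr rfl fun y _ => ?_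
    rw [x_sig, x_sph_card]
    split_ifs <;> simp
  rw [this]
  exact mul_inv_le_one

lemma x_approx_L {m N M w k : ℕ} (hk : 2 * M * w ≤ k) (L : ((Fin N → ZMod (m + 1)) → ℂ) →ₗ[ℝ] ℂ) :
    ‖L (sigmaC m N (k : ℤ)) - L (xrho m N M w k)‖ ≤
      ((2 ^ M - 1) / w) * ∑ l ∈ range (2 * M * w - w), ‖L (sigmaC m N ((k - 2 * M * w + l : ℕ) : ℤ))‖ := by
  unfold xrho
  rw [xT_map]
  have := xT_approx w M (fun l : ℕ => L (sigmaC m N (l : ℤ))) (k - 2 * M * w)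
  rw [Nat.sub_add_cancel hk] at this
  exact this

lemma x_rho_l1 {m N M w k : ℕ} (hw : 0 < w) (hk : 2 * M * w ≤ k) :
    ∑ y, ‖xrho m N M w k y‖ ≤ 1 + 2 ^ M * (2 * M) := by
  have hw' : (0:ℝ) < w := by exact_mod_cast hw
  have h2 : (1:ℝ) ≤ 2 ^ M := one_le_pow₀ (by norm_num)
  have h : ∀ y, ‖xrho m N M w k y‖ ≤ ‖sigmaC m N (k : ℤ) y‖ +
      ((2 ^ M - 1) / w) * ∑ l ∈ range (2 * M * w - w), ‖sigmaC m N ((k - 2 * M * w + l : ℕ) : ℤ) y‖ := by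
    intro y
    have := x_approx_L (m := m) (N := N) hk (LinearMap.proj y)
    simp only [LinearMap.proj_apply] at this
    have t := norm_le_norm_add_norm_sub (sigmaC m N (k : ℤ) y) (xrho m N M w k y)
    linarith
  refine (Finset.sum_le_sum fun y _ => h y).trans ?_
  rw [Finset.sum_add_distrib, ← Finset.mul_sum, Finset.sum_comm]
  have h3 : ∑ l ∈ range (2 * M * w - w), ∑ y, ‖sigmaC m N ((k - 2 * M * w + l : ℕ) : ℤ) y‖ ≤ 2 * M * w := by
    refine (Finset.sum_le_sum fun l _ => x_sig_l1 m N _).trans ?_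
    simp only [sum_const, card_range, nsmul_eq_mul, mul_one]
    have : 2 * M * w - w ≤ 2 * M * w := Nat.sub_le _ _
    exact_mod_cast this
  have h4 : ((2:ℝ) ^ M - 1) / w * ∑ l ∈ range (2 * M * w - w), ∑ y, ‖sigmaC m N ((k - 2 * M * w + l : ℕ) : ℤ) y‖
      ≤ (2 ^ M - 1) / w * (2 * M * w) := by
    apply mul_le_mul_of_nonneg_left h3
    apply div_nonneg _ hw'.le
    linarith
  have h5 : ((2:ℝ) ^ M - 1) / w * (2 * M * w) = (2 ^ M - 1) * (2 * M) := by field_simp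
  have h6 : (0:ℝ) ≤ 2 * M := by positivity
  have := x_sig_l1 m N k
  nlinarith

lemma x_rho_mult {m N M w k : ℕ} (hm : 2 ≤ m) (hw : 0 < w) (hk : 2 * M * w ≤ k) (hN : k + M ≤ N)
    (ψ : AddChar (Fin N → ZMod (m + 1)) ℂ) :
    ‖∑ y, xrho m N M w k y * ψ y‖ ≤ (2 * w) ^ M * ((m + 1) ^ M * M.factorial / ((k - 2 * M * w + 1 : ℕ) : ℝ) ^ M) := by
  obtain ⟨a, ha, hak⟩ := x_char (N := N) hm ψ
  let L : ((Fin N → ZMod (m + 1)) → ℂ) →ₗ[ℝ] ℂ :=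
    { toFun := fun g => ∑ y, g y * ψ y
      map_add' := by intro f g; simp [add_mul, Finset.sum_add_distrib]
      map_smul' := by intro c g; simp [Finset.mul_sum, mul_assoc] }
  have h1 : ∑ y, xrho m N M w k y * ψ y = L (xrho m N M w k) := rfl
  rw [h1]
  unfold xrho
  rw [xT_map]
  apply xT_small _ _ _ _ hw
  intro i hi
  have h2 : (fwdDiff 1)^[M] (fun l : ℕ => L (sigmaC m N (l : ℤ))) (k - 2 * M * w + i) = xD a M (k - 2 * M * w + i) := by
    rw [← xD_fwd a M _ (by omega), fwdDiff_iter_eq_sum_shift, fwdDiff_iter_eq_sum_shift]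
    refine Finset.sum_congr rfl fun j hj => ?_
    rw [mem_range] at hj
    congr 1
    simp only [smul_eq_mul, mul_one]
    exact hak _ (by omega)
  rw [h2]
  refine (xD_bound hm a ha M _ (by omega)).trans ?_
  have h3 := Nat.pow_le_choose (α := ℝ) M (k - 2 * M * w + i + M)
  have h4 : ((k - 2 * M * w + 1 : ℕ) : ℝ) ^ M / M.factorial ≤ ((k - 2 * M * w + i + M).choose M : ℝ) := by
    refine le_trans ?_ h3
    gcongr
    omega
  have h5 : (0:ℝ) < ((k - 2 * M * w + 1 : ℕ) : ℝ) ^ M / M.factorial := by positivity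
  calc ((m:ℝ)+1)^M / ((k - 2 * M * w + i + M).choose M : ℝ) ≤ ((m:ℝ)+1)^M / (((k - 2 * M * w + 1 : ℕ) : ℝ) ^ M / M.factorial) := by
        gcongr
    _ = _ := by rw [div_div_eq_mul_div]

def xw (k : ℕ) : ℕ := 2 * (Nat.sqrt k + 1)

lemma xw_pos (k : ℕ) : 0 < xw k := by unfold xw; omega

lemma xw_sq (k : ℕ) : 4 * k ≤ xw k ^ 2 := by
  unfold xw
  have := Nat.lt_succ_sqrt k
  simp only [Nat.succ_eq_add_one] at this
  nlinarith

lemma xw_le (k : ℕ) (hk : 1 ≤ k) : xw k ^ 2 ≤ 16 * k := by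
  unfold xw
  have h := Nat.sqrt_le k
  have h1 : 1 ≤ Nat.sqrt k := by
    rw [Nat.le_sqrt]; omega
  nlinarith

lemma xw_M (C k : ℕ) (hk : 16 * C ^ 2 + 1 ≤ k) : C * xw k ≤ k := by
  have h := xw_le k (by omega)
  by_contra hc
  push Not at hc
  have : k ^ 2 < C ^ 2 * xw k ^ 2 := by
    rw [← mul_pow]; exact Nat.pow_lt_pow_left hc (by norm_num)
  nlinarith

lemma x_rem {m M : ℕ} (hm : 2 ≤ m) {p : ℝ} (hp : 1 < p) (hp2 : p < 2) (hM : 2 ≤ M * (p - 1)) :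
    ∃ K : ℝ, 0 ≤ K ∧ ∀ N k : ℕ, 16 * (4 * M) ^ 2 + 1 ≤ k → k + M ≤ N → ∀ f : (Fin N → ZMod (m + 1)) → ℂ,
      ∑ x, ‖convC (xrho m N M (xw k) k) f x‖ ^ p ≤ K / (k : ℝ) ^ 2 * ∑ x, ‖f x‖ ^ p := by
  set A : ℝ := 1 + 2 ^ M * (2 * M) with hA
  set B0 : ℝ := ((16 * (m + 1)) ^ M * M.factorial) ^ 2 with hB0
  have hA0 : 0 ≤ A := by positivity
  have hB00 : 0 < B0 := by positivity
  have hc0 : 0 ≤ 2*A*p/(p-1)+4*p/(2-p) := by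
    have : 0 < p - 1 := by linarith
    have : 0 < 2 - p := by linarith
    positivity
  refine ⟨(2*A*p/(p-1)+4*p/(2-p)) * B0 ^ (p - 1), by positivity, ?_⟩
  intro N k hk hN f
  have hk1 : 1 ≤ k := by omega
  have hkR : (1:ℝ) ≤ k := by exact_mod_cast hk1
  have hw4 := xw_M (4 * M) k hk
  have hwk : 2 * M * xw k ≤ k := by nlinarith
  have hwpos := xw_pos k
  have hE : 0 < B0 / (k:ℝ) ^ M := by positivity
  have hmul : ∀ ψ : AddChar (Fin N → ZMod (m + 1)) ℂ, ‖∑ y, xrho m N M (xw k) k y * ψ y‖ ≤ √(B0 / (k:ℝ) ^ M) := by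
    intro ψ
    refine (x_rho_mult hm hwpos hwk hN ψ).trans ?_
    apply Real.le_sqrt_of_sq_le
    have hn : (k:ℝ) / 2 ≤ ((k - 2 * M * xw k + 1 : ℕ) : ℝ) := by
      rw [div_le_iff₀ (by norm_num)]
      have : k ≤ (k - 2 * M * xw k + 1) * 2 := by
        have : 4 * M * xw k = 2 * (2 * M * xw k) := by ring
        omega
      exact_mod_cast this
    have hw2 : ((xw k : ℕ) : ℝ) ^ 2 ≤ 16 * k := by exact_mod_cast xw_le k hk1
    calc ((2 * (xw k : ℝ)) ^ M * ((m + 1) ^ M * M.factorial / ((k - 2 * M * xw k + 1 : ℕ) : ℝ) ^ M)) ^ 2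
        ≤ ((2 * (xw k : ℝ)) ^ M * ((m + 1) ^ M * M.factorial / ((k:ℝ)/2) ^ M)) ^ 2 := by gcongr
      _ = ((xw k : ℝ) ^ 2) ^ M * (4 ^ M * 4 ^ M * ((m + 1) ^ M * M.factorial) ^ 2 / ((k:ℝ) ^ 2) ^ M) := by
          rw [mul_pow, div_pow, mul_pow, div_pow, div_pow]
          rw [show (4:ℝ) = 2 ^ 2 by norm_num]
          simp only [← pow_mul]
          rw [mul_comm 2 M]
          field_simp
          ring
      _ ≤ (16 * (k:ℝ)) ^ M * (4 ^ M * 4 ^ M * ((m + 1) ^ M * M.factorial) ^ 2 / ((k:ℝ) ^ 2) ^ M) := by gcongr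
      _ = B0 / (k:ℝ) ^ M := by
          rw [hB0]
          simp only [mul_pow]
          rw [show (16:ℝ) = 2 ^ 4 by norm_num, show (4:ℝ) = 2 ^ 2 by norm_num]
          simp only [← pow_mul]
          have : (k:ℝ) ^ (2 * M) = (k:ℝ)^M * (k:ℝ)^M := by rw [two_mul, pow_add]
          rw [this]
          field_simp
          ring
  have h2 : ∀ f : (Fin N → ZMod (m + 1)) → ℂ, ∑ x, ‖convC (xrho m N M (xw k) k) f x‖ ^ 2 ≤ (B0 / (k:ℝ) ^ M) * ∑ x, ‖f x‖ ^ 2 := by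
    intro f
    have := x_l2 _ _ hmul f
    rwa [Real.sq_sqrt hE.le] at this
  have h1 : ∀ f : (Fin N → ZMod (m + 1)) → ℂ, ∑ x, ‖convC (xrho m N M (xw k) k) f x‖ ≤ A * ∑ x, ‖f x‖ := by
    intro f
    unfold convC
    calc ∑ x, ‖∑ y, xrho m N M (xw k) k y * f (x - y)‖ ≤ ∑ x, ∑ y, ‖xrho m N M (xw k) k y‖ * ‖f (x - y)‖ := by
          refine Finset.sum_le_sum fun x _ => (norm_sum_le _ _).trans ?_
          simp
      _ = ∑ y, ‖xrho m N M (xw k) k y‖ * ∑ x, ‖f x‖ := by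
          rw [Finset.sum_comm]
          refine Finset.sum_congr rfl fun y _ => ?_
          rw [← Finset.mul_sum]
          congr 1
          exact Equiv.sum_comp (Equiv.subRight y) (fun x => ‖f x‖)
      _ = (∑ y, ‖xrho m N M (xw k) k y‖) * ∑ x, ‖f x‖ := by rw [Finset.sum_mul]
      _ ≤ _ := by
          apply mul_le_mul_of_nonneg_right (x_rho_l1 hwpos hwk)
          positivity
  have := x_interp hp hp2 hA0 hE (fun f => convC (xrho m N M (xw k) k) f)
    (by intro f g x; simp [convC, mul_add, Finset.sum_add_distrib]) h1 h2 f
  refine this.trans ?_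
  apply mul_le_mul_of_nonneg_right _ (by positivity)
  rw [mul_div_assoc (2*A*p/(p-1)+4*p/(2-p))]
  apply mul_le_mul_of_nonneg_left _ hc0
  rw [Real.div_rpow hB00.le (by positivity)]
  gcongr
  rw [← Real.rpow_natCast (k:ℝ) M, ← Real.rpow_mul (by positivity), ← Real.rpow_natCast]
  apply Real.rpow_le_rpow_of_exponent_le hkR
  exact_mod_cast hM

lemma x_main_conv {m N M w k : ℕ} (hk : 2 * M * w ≤ k) (f : (Fin N → ZMod (m + 1)) → ℂ) (x : Fin N → ZMod (m + 1)) :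
    ‖convC (sigmaC m N (k : ℤ)) f x - convC (xrho m N M w k) f x‖ ≤
      ((2 ^ M - 1) / w) * ∑ l ∈ range (2 * M * w - w), ‖convC (sigmaC m N ((k - 2 * M * w + l : ℕ) : ℤ)) f x‖ := by
  let L : ((Fin N → ZMod (m + 1)) → ℂ) →ₗ[ℝ] ℂ :=
    { toFun := fun g => convC g f x
      map_add' := by intro f g; simp [convC, add_mul, Finset.sum_add_distrib]
      map_smul' := by intro c g; simp [convC, Finset.mul_sum, mul_assoc] }
  exact x_approx_L hk L

def xbin (m j l : ℕ) : ℝ := j.choose l * m ^ l / (m + 1) ^ j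

lemma xbin_nonneg (m j l : ℕ) : 0 ≤ xbin m j l := by unfold xbin; positivity

lemma xbin_succ (m j l : ℕ) : ∑ i ∈ range (l + 1), xbin m j i - ∑ i ∈ range (l + 1), xbin m (j + 1) i
    = (m / (m + 1)) * xbin m j l := by
  have hm : (m : ℝ) + 1 ≠ 0 := by positivity
  induction l with
  | zero =>
    simp [xbin]
    field_simp
    ring
  | succ l ih =>
    rw [Finset.sum_range_succ, Finset.sum_range_succ _ (l + 1)]
    have : xbin m j (l + 1) - xbin m (j + 1) (l + 1) = (m / (m + 1)) * xbin m j (l + 1) - (m / (m + 1)) * xbin m j l := by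
      unfold xbin
      rw [Nat.choose_succ_succ]
      push_cast
      field_simp
      ring
    linarith

lemma xbin_tel (m a b l : ℕ) (hab : a ≤ b) : ∑ i ∈ range (l + 1), xbin m a i - ∑ i ∈ range (l + 1), xbin m b i
    ≤ ∑ j ∈ Ico a b, xbin m j l := by
  induction b, hab using Nat.le_induction with
  | base => simp
  | succ b hb ih =>
    rw [Finset.sum_Ico_succ_top hb]
    have h := xbin_succ m b l
    have h2 : (m / (m + 1) : ℝ) * xbin m b l ≤ 1 * xbin m b l := by
      apply mul_le_mul_of_nonneg_right _ (xbin_nonneg _ _ _)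
      rw [div_le_one (by positivity)]; linarith
    linarith

lemma xbin_eval (m j l : ℕ) (h : l ≤ j) : xbin m j l = (bernsteinPolynomial ℝ j l).eval ((m : ℝ) / (m + 1)) := by
  have hm : (m : ℝ) + 1 ≠ 0 := by positivity
  unfold xbin bernsteinPolynomial
  simp only [Polynomial.eval_mul, Polynomial.eval_pow, Polynomial.eval_sub, Polynomial.eval_one, Polynomial.eval_X,
    Polynomial.eval_natCast]
  have : 1 - (m : ℝ) / (m + 1) = 1 / (m + 1) := by field_simp; ring
  rw [this, div_pow, one_div, inv_pow]
  obtain ⟨d, rfl⟩ := Nat.exists_eq_add_of_le h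
  rw [Nat.add_sub_cancel_left, pow_add]
  field_simp

lemma xbin_sum (m j : ℕ) : ∑ l ∈ range (j + 1), xbin m j l = 1 := by
  rw [Finset.sum_congr rfl fun l hl => xbin_eval m j l (by rw [mem_range] at hl; omega)]
  rw [← Polynomial.eval_finsetSum, bernsteinPolynomial.sum]
  simp

lemma xbin_var (m j : ℕ) : ∑ l ∈ range (j + 1), ((j : ℝ) * ((m : ℝ) / (m + 1)) - l) ^ 2 * xbin m j l ≤ (j : ℝ) / 4 := by
  have h := congrArg (Polynomial.eval ((m : ℝ) / (m + 1))) (bernsteinPolynomial.variance ℝ j)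
  simp only [Polynomial.eval_finsetSum, Polynomial.eval_mul, Polynomial.eval_pow, Polynomial.eval_sub,
    Polynomial.eval_one, Polynomial.eval_X, Polynomial.eval_natCast, nsmul_eq_mul] at h
  rw [Finset.sum_congr rfl fun l hl => by rw [xbin_eval m j l (by rw [mem_range] at hl; omega)]]
  rw [h]
  have : (m : ℝ) / (m + 1) * (1 - (m : ℝ) / (m + 1)) ≤ 1 / 4 := by nlinarith [sq_nonneg ((m : ℝ) / (m + 1) - 1/2)]
  have hj : (0:ℝ) ≤ j := by positivity
  nlinarith

lemma xbin_zero (m j l : ℕ) (h : j < l) : xbin m j l = 0 := by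
  unfold xbin; rw [Nat.choose_eq_zero_of_lt h]; simp

lemma xbin_cheb (m j : ℕ) (s : Finset ℕ) (w : ℝ)
    (h : ∀ l ∈ s, w ^ 2 ≤ (j * ((m : ℝ) / (m + 1)) - l) ^ 2) : w ^ 2 * ∑ l ∈ s, xbin m j l ≤ (j : ℝ) / 4 := by
  refine le_trans ?_ (xbin_var m j)
  rw [Finset.mul_sum]
  calc ∑ l ∈ s, w ^ 2 * xbin m j l = ∑ l ∈ s.filter (fun l => l ∈ range (j + 1)), w ^ 2 * xbin m j l := by
        rw [Finset.sum_filter]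
        refine Finset.sum_congr rfl fun l _ => ?_
        split_ifs with hl
        · rfl
        · rw [xbin_zero _ _ _ (by simpa using hl), mul_zero]
    _ ≤ ∑ l ∈ s.filter (fun l => l ∈ range (j + 1)), (j * ((m : ℝ) / (m + 1)) - l) ^ 2 * xbin m j l := by
        refine Finset.sum_le_sum fun l hl => ?_
        exact mul_le_mul_of_nonneg_right (h l (mem_filter.1 hl).1) (xbin_nonneg _ _ _)
    _ ≤ _ := by
        refine Finset.sum_le_sum_of_subset_of_nonneg ?_ ?_
        · intro l hl; exact (mem_filter.1 hl).2
        · intro l _ _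
          exact mul_nonneg (sq_nonneg _) (xbin_nonneg _ _ _)

lemma xbin_lower {m M k w N : ℕ} (hm : 2 ≤ m) (hk : 2 ≤ k) (hw : 4 * k ≤ w ^ 2) (hw2 : 2 ≤ w)
    (hMw : (2 * M + 1) * w ≤ k) (hN : k * (m + 1) ≤ m * N) :
    ∃ a b : ℕ, b ≤ N ∧ b ≤ a + (4 * M + 4) * w ∧
      ∀ l, k - 2 * M * w ≤ l → l + w ≤ k → 1 / 2 ≤ ∑ j ∈ Ico a b, xbin m j l := by
  have hmR : (2:ℝ) ≤ m := by exact_mod_cast hm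
  obtain ⟨b, hb1, hb2⟩ : ∃ b : ℕ, k * (m + 1) ≤ m * b ∧ m * b + 1 ≤ k * (m + 1) + m := by
    refine ⟨(k * (m + 1) + (m - 1)) / m, ?_, ?_⟩
    · have h1 := Nat.div_add_mod (k * (m + 1) + (m - 1)) m
      have h2 := Nat.mod_lt (k * (m + 1) + (m - 1)) (show 0 < m by omega)
      omega
    · have h1 := Nat.div_add_mod (k * (m + 1) + (m - 1)) m
      omega
  obtain ⟨u, hu⟩ := Nat.exists_eq_add_of_le hMw
  obtain ⟨a, ha1, ha2⟩ : ∃ a : ℕ, m * a ≤ u * (m + 1) ∧ u * (m + 1) + 1 ≤ m * a + m := by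
    refine ⟨u * (m + 1) / m, ?_, ?_⟩
    · exact Nat.mul_div_le _ _
    · have h1 := Nat.div_add_mod (u * (m + 1)) m
      have h2 := Nat.mod_lt (u * (m + 1)) (show 0 < m by omega)
      omega
  have hab : a ≤ b := by
    have : m * a ≤ m * b := by
      refine ha1.trans (le_trans ?_ hb1)
      apply Nat.mul_le_mul_right; omega
    exact Nat.le_of_mul_le_mul_left this (by omega)
  refine ⟨a, b, ?_, ?_, ?_⟩
  · have h1 : m * b < m * (N + 1) := by
      have : m * (N + 1) = m * N + m := by ring
      omega
    have := Nat.lt_of_mul_lt_mul_left h1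
    omega
  · have h1 : m * b ≤ m * (a + (4 * M + 4) * w) := by
      have : m * (a + (4 * M + 4) * w) = m * a + m * ((4 * M + 4) * w) := by ring
      rw [this]
      have e : k * (m + 1) = (2 * M + 1) * w * (m + 1) + u * (m + 1) := by rw [hu]; ring
      have e2 : (2 * M + 1) * w * (m + 1) + 2 * m ≤ m * ((4 * M + 4) * w) := by
        have : (2 * M + 1) * w * (m + 1) ≤ (2 * M + 1) * w * (2 * m) := by
          apply Nat.mul_le_mul_left; omega
        nlinarith
      omega
    exact Nat.le_of_mul_le_mul_left h1 (by omega)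
  · intro l hl1 hl2
    refine le_trans ?_ (xbin_tel m a b l hab)
    have hwR : 4 * (k:ℝ) ≤ (w:ℝ) ^ 2 := by exact_mod_cast hw
    have hkR : (2:ℝ) ≤ k := by exact_mod_cast hk
    have hb1R : (k:ℝ) * (m + 1) ≤ m * b := by exact_mod_cast hb1
    have hb2R : (m:ℝ) * b + 1 ≤ k * (m + 1) + m := by exact_mod_cast hb2
    have ha1R : (m:ℝ) * a ≤ u * (m + 1) := by exact_mod_cast ha1
    have huR : (k:ℝ) = (2 * M + 1) * w + u := by exact_mod_cast hu
    have hlR : (l:ℝ) + w ≤ k := by exact_mod_cast hl2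
    have hlR2 : (k:ℝ) ≤ l + 2 * M * w := by
      have : k ≤ l + 2 * M * w := by omega
      exact_mod_cast this
    have hw0 : (0:ℝ) ≤ w := by positivity
    have hbk : (b:ℝ) ≤ 2 * k := by
      have : (m:ℝ) * b ≤ m * (2 * k) := by nlinarith
      exact le_of_mul_le_mul_left this (by linarith)
    have hak : (a:ℝ) ≤ 2 * k := by
      have : (a:ℝ) ≤ b := by exact_mod_cast hab
      linarith
    have cb : (k:ℝ) ≤ b * ((m:ℝ) / (m + 1)) := by
      rw [← mul_div_assoc, le_div_iff₀ (by positivity)]; linarith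
    have ca : a * ((m:ℝ) / (m + 1)) ≤ u := by
      rw [← mul_div_assoc, div_le_iff₀ (by positivity)]; linarith
    have h1 := xbin_cheb m b (range (l + 1)) w (by
      intro i hi
      rw [mem_range] at hi
      have : (i:ℝ) ≤ l := by exact_mod_cast (by omega : i ≤ l)
      apply pow_le_pow_left₀ hw0
      linarith)
    have h2 := xbin_cheb m a (Ico (l + 1) (l + 1 + a + 1)) w (by
      intro i hi
      rw [mem_Ico] at hi
      have : (l:ℝ) ≤ i := by exact_mod_cast (by omega : l ≤ i)
      rw [← neg_sq (_ - (i:ℝ))]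
      apply pow_le_pow_left₀ hw0
      linarith)
    have h3 : ∑ i ∈ range (l + 1), xbin m a i + ∑ i ∈ Ico (l + 1) (l + 1 + a + 1), xbin m a i = 1 := by
      rw [Finset.sum_range_add_sum_Ico _ (by omega), ← xbin_sum m a]
      symm
      apply Finset.sum_subset
      · intro i; simp only [mem_range]; omega
      · intro i _ hi
        apply xbin_zero; simpa using hi
    have n1 : 0 ≤ ∑ i ∈ range (l + 1), xbin m b i := Finset.sum_nonneg fun i _ => xbin_nonneg _ _ _
    have n2 : 0 ≤ ∑ i ∈ Ico (l + 1) (l + 1 + a + 1), xbin m a i := Finset.sum_nonneg fun i _ => xbin_nonneg _ _ _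
    have q1 : ∑ i ∈ range (l + 1), xbin m b i ≤ 1 / 8 := by
      have : 4 * (k:ℝ) * ∑ i ∈ range (l + 1), xbin m b i ≤ 4 * k * (1 / 8) := by nlinarith
      exact le_of_mul_le_mul_left this (by linarith)
    have q2 : ∑ i ∈ Ico (l + 1) (l + 1 + a + 1), xbin m a i ≤ 1 / 8 := by
      have : 4 * (k:ℝ) * ∑ i ∈ Ico (l + 1) (l + 1 + a + 1), xbin m a i ≤ 4 * k * (1 / 8) := by nlinarith
      exact le_of_mul_le_mul_left this (by linarith)
    linarith

def xS (m N k : ℕ) (f : (Fin N → ZMod (m + 1)) → ℝ) (x : Fin N → ZMod (m + 1)) : ℝ :=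
  ∑ y, (if hw y = k then ((N.choose k * m ^ k : ℕ) : ℝ)⁻¹ else 0) * f (x - y)

def xB (m N j : ℕ) (f : (Fin N → ZMod (m + 1)) → ℝ) (x : Fin N → ZMod (m + 1)) : ℝ :=
  ∑ l ∈ range (N + 1), xbin m j l * xS m N l f x

open Classical in
def xE {G : Type*} [AddCommGroup G] [Fintype G] (H : AddSubgroup G) (f : G → ℝ) (x : G) : ℝ :=
  ((univ.filter fun z => z ∈ H).card : ℝ)⁻¹ * ∑ z ∈ univ.filter (fun z => z ∈ H), f (x - z)

lemma xE_inv {G : Type*} [AddCommGroup G] [Fintype G] (H : AddSubgroup G) (f : G → ℝ) (x z : G) (hz : z ∈ H) :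
    xE H f (x - z) = xE H f x := by
  classical
  unfold xE
  congr 1
  refine Finset.sum_bij (fun y _ => z + y) ?_ ?_ ?_ ?_
  · intro y hy
    simp only [mem_filter, mem_univ, true_and] at hy ⊢
    exact H.add_mem hz hy
  · intro y _ y' _ h; exact add_left_cancel h
  · intro y hy
    simp only [mem_filter, mem_univ, true_and] at hy
    refine ⟨-z + y, ?_, by simp⟩
    simp only [mem_filter, mem_univ, true_and]
    exact H.add_mem (H.neg_mem hz) hy
  · intro y _; rw [sub_sub]

lemma xE_adj {G : Type*} [AddCommGroup G] [Fintype G] (H : AddSubgroup G) (f b : G → ℝ)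
    (hb : ∀ x, ∀ z ∈ H, b (x - z) = b x) : ∑ x, b x * xE H f x = ∑ x, b x * f x := by
  classical
  unfold xE
  have hc : ((univ.filter fun z => z ∈ H).card : ℝ) ≠ 0 := by
    have : 0 < (univ.filter fun z => z ∈ H).card := Finset.card_pos.2 ⟨0, by simp⟩
    exact_mod_cast this.ne'
  have h1 : ∑ x, b x * (((univ.filter fun z => z ∈ H).card : ℝ)⁻¹ * ∑ z ∈ univ.filter (fun z => z ∈ H), f (x - z))
      = ((univ.filter fun z => z ∈ H).card : ℝ)⁻¹ * ∑ z ∈ univ.filter (fun z => z ∈ H), ∑ x, b x * f (x - z) := by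
    rw [Finset.sum_comm, Finset.mul_sum]
    refine Finset.sum_congr rfl fun x _ => ?_
    rw [Finset.mul_sum, Finset.mul_sum, Finset.mul_sum]
    refine Finset.sum_congr rfl fun z _ => ?_
    ring
  rw [h1]
  have h2 : ∀ z ∈ univ.filter (fun z => z ∈ H), ∑ x, b x * f (x - z) = ∑ x, b x * f x := by
    intro z hz
    simp only [mem_filter, mem_univ, true_and] at hz
    rw [← Equiv.sum_comp (Equiv.subRight z) (fun x => b x * f x)]
    refine Finset.sum_congr rfl fun x _ => ?_
    simp only [Equiv.subRight_apply]
    rw [hb x z hz]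
  rw [Finset.sum_congr rfl h2, sum_const, nsmul_eq_mul]
  field_simp

def xH (m N : ℕ) (π : Equiv.Perm (Fin N)) (j : ℕ) : AddSubgroup (Fin N → ZMod (m + 1)) where
  carrier := {z | ∀ t, j ≤ (π t).val → z t = 0}
  zero_mem' := by intro t _; rfl
  add_mem' := by
    intro a b ha hb t ht
    simp [ha t ht, hb t ht]
  neg_mem' := by
    intro a ha t ht
    simp [ha t ht]

lemma xH_mem {m N : ℕ} (π : Equiv.Perm (Fin N)) (j : ℕ) (z : Fin N → ZMod (m + 1)) :
    z ∈ xH m N π j ↔ ∀ t, j ≤ (π t).val → z t = 0 := Iff.rfl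

open Classical in
lemma xH_card (m N : ℕ) (π : Equiv.Perm (Fin N)) (j : ℕ) (hj : j ≤ N) :
    (univ.filter fun z => z ∈ xH m N π j).card = (m + 1) ^ j := by
  have : (univ.filter fun z => z ∈ xH m N π j)
      = Fintype.piFinset fun t => if j ≤ (π t).val then ({0} : Finset (ZMod (m + 1))) else univ := by
    ext z
    simp only [mem_filter, mem_univ, true_and, xH_mem, Fintype.mem_piFinset]
    refine forall_congr' fun t => ?_
    by_cases h : j ≤ (π t).val <;> simp [h]
  rw [this, Fintype.card_piFinset]
  have e : ∀ t, (if j ≤ (π t).val then ({0} : Finset (ZMod (m + 1))) else univ).card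
      = (fun s : Fin N => if s ∈ xIv N 0 j then m + 1 else 1) (π t) := by
    intro t
    by_cases h : j ≤ (π t).val
    · simp [h, xIv]
    · simp [h, xIv, ZMod.card, not_le.1 h]
  simp only [e]
  rw [Equiv.prod_comp π (fun s : Fin N => if s ∈ xIv N 0 j then m + 1 else 1), Finset.prod_ite_mem]
  simp [xIv_card hj]

lemma x_count (N j : ℕ) (hj : j ≤ N) (S : Finset (Fin N)) :
    (univ.filter fun π : Equiv.Perm (Fin N) => ∀ t ∈ S, (π t).val < j).card * N.choose S.card
      = N.factorial * j.choose S.card := by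
  classical
  have sym : ∀ S' ∈ powersetCard S.card (univ : Finset (Fin N)),
      (univ.filter fun π : Equiv.Perm (Fin N) => ∀ t ∈ S', (π t).val < j).card
      = (univ.filter fun π : Equiv.Perm (Fin N) => ∀ t ∈ S, (π t).val < j).card := by
    intro S' hS'
    rw [mem_powersetCard] at hS'
    obtain ⟨ρ, h1, _⟩ := x_perm S' ∅ S ∅ (by simp) (by simp) hS'.2 rfl
    symm
    refine Finset.card_bij (fun π _ => π * ρ) ?_ ?_ ?_
    · intro π hπ
      simp only [mem_filter, mem_univ, true_and] at hπ ⊢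
      intro t ht
      exact hπ _ ((h1 t).2 ht)
    · intro π _ π' _ h; exact mul_right_cancel h
    · intro π hπ
      simp only [mem_filter, mem_univ, true_and] at hπ
      refine ⟨π * ρ⁻¹, ?_, by simp⟩
      simp only [mem_filter, mem_univ, true_and]
      intro t ht
      have : (ρ⁻¹ t) ∈ S' := by rw [← h1]; simpa using ht
      exact hπ _ this
  have e1 : ∑ S' ∈ powersetCard S.card (univ : Finset (Fin N)),
      (univ.filter fun π : Equiv.Perm (Fin N) => ∀ t ∈ S', (π t).val < j).card
      = N.choose S.card * (univ.filter fun π : Equiv.Perm (Fin N) => ∀ t ∈ S, (π t).val < j).card := by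
    rw [Finset.sum_congr rfl sym, sum_const, card_powersetCard, card_univ, Fintype.card_fin, smul_eq_mul]
  have e2 : ∑ S' ∈ powersetCard S.card (univ : Finset (Fin N)),
      (univ.filter fun π : Equiv.Perm (Fin N) => ∀ t ∈ S', (π t).val < j).card
      = N.factorial * j.choose S.card := by
    simp only [Finset.card_filter]
    rw [Finset.sum_comm]
    have : ∀ π : Equiv.Perm (Fin N), ∑ S' ∈ powersetCard S.card (univ : Finset (Fin N)),
        (if ∀ t ∈ S', (π t).val < j then 1 else 0) = j.choose S.card := by
      intro π
      rw [← Finset.card_filter]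
      have : (powersetCard S.card (univ : Finset (Fin N))).filter (fun S' => ∀ t ∈ S', (π t).val < j)
          = powersetCard S.card ((xIv N 0 j).map π.symm.toEmbedding) := by
        ext S'
        simp only [mem_filter, mem_powersetCard, subset_univ, true_and]
        rw [and_comm]
        refine and_congr_left fun _ => ?_
        refine forall_congr' fun t => ?_
        simp [xIv]
      rw [this, card_powersetCard, card_map, xIv_card hj, Nat.sub_zero]
    simp only [this, sum_const, card_univ, Fintype.card_perm, Fintype.card_fin, smul_eq_mul]
  rw [mul_comm, ← e1, e2]

lemma xB_eq {m N j : ℕ} (hm : 2 ≤ m) (hj : j ≤ N) (f : (Fin N → ZMod (m + 1)) → ℝ) (x : Fin N → ZMod (m + 1)) :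
    xB m N j f x = (N.factorial : ℝ)⁻¹ * ∑ π : Equiv.Perm (Fin N), xE (xH m N π j) f x := by
  classical
  have hm0 : (m : ℝ) ≠ 0 := by
    have : m ≠ 0 := by omega
    exact_mod_cast this
  have hL : xB m N j f x = ∑ y, (xbin m j (hw y) * ((N.choose (hw y) * m ^ (hw y) : ℕ) : ℝ)⁻¹) * f (x - y) := by
    unfold xB xS
    simp only [Finset.mul_sum]
    rw [Finset.sum_comm]
    refine Finset.sum_congr rfl fun y _ => ?_
    rw [Finset.sum_eq_single (hw y)]
    · simp; ring
    · intro l _ hl; rw [if_neg (Ne.symm hl)]; simp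
    · intro h
      exfalso; apply h
      rw [mem_range]
      have : hw y ≤ N := by
        unfold hw; exact (Finset.card_le_univ _).trans (by simp)
      omega
  have hR : ∑ π : Equiv.Perm (Fin N), xE (xH m N π j) f x
      = ∑ y, ((((m + 1) ^ j : ℕ) : ℝ)⁻¹ * ((univ.filter fun π : Equiv.Perm (Fin N) => y ∈ xH m N π j).card : ℝ)) * f (x - y) := by
    unfold xE
    simp only [xH_card m N _ j hj]
    rw [← Finset.mul_sum]
    simp only [Finset.sum_filter]
    rw [Finset.sum_comm, Finset.mul_sum]
    refine Finset.sum_congr rfl fun y _ => ?_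
    rw [← Finset.sum_filter, sum_const, nsmul_eq_mul]
    ring
  rw [hL, hR, Finset.mul_sum]
  refine Finset.sum_congr rfl fun y _ => ?_
  rw [← mul_assoc]
  congr 1
  have hc := x_count N j hj (univ.filter fun i => y i ≠ 0)
  have e : (univ.filter fun π : Equiv.Perm (Fin N) => ∀ t ∈ (univ.filter fun i => y i ≠ 0), (π t).val < j)
      = univ.filter fun π : Equiv.Perm (Fin N) => y ∈ xH m N π j := by
    ext π
    simp only [mem_filter, mem_univ, true_and, xH_mem]
    refine forall_congr' fun t => ?_
    rw [← not_lt, not_imp_comm]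
  rw [e] at hc
  have hwN : (univ.filter fun i => y i ≠ 0).card ≤ N := (Finset.card_le_univ _).trans (by simp)
  have hcR : ((univ.filter fun π : Equiv.Perm (Fin N) => y ∈ xH m N π j).card : ℝ) * (N.choose (hw y) : ℝ)
      = N.factorial * (j.choose (hw y) : ℝ) := by exact_mod_cast hc
  have hch : (N.choose (hw y) : ℝ) ≠ 0 := by exact_mod_cast (Nat.choose_pos hwN).ne'
  have hf : (N.factorial : ℝ) ≠ 0 := by positivity
  unfold xbin
  push_cast
  field_simp
  linarith

lemma xE_nonneg {G : Type*} [AddCommGroup G] [Fintype G] (H : AddSubgroup G) (f : G → ℝ) (hf : ∀ x, 0 ≤ f x) (x : G) :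
    0 ≤ xE H f x := by
  unfold xE
  exact mul_nonneg (by positivity) (Finset.sum_nonneg fun _ _ => hf _)

lemma xB_max {m N : ℕ} (hm : 2 ≤ m) {p : ℝ} (hp : 1 < p) (f : (Fin N → ZMod (m + 1)) → ℝ) (hf : ∀ x, 0 ≤ f x) :
    ∃ W : (Fin N → ZMod (m + 1)) → ℝ, (∀ x, 0 ≤ W x) ∧ (∀ j ≤ N, ∀ x, xB m N j f x ≤ W x) ∧
      ∑ x, W x ^ p ≤ (p / (p - 1)) ^ p * ∑ x, f x ^ p := by
  let g : Equiv.Perm (Fin N) → ℕ → (Fin N → ZMod (m + 1)) → ℝ := fun π i => xE (xH m N π (N - i)) f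
  have hd : ∀ π, ∑ x, (xMm (g π) (N + 1) x) ^ p ≤ (p / (p - 1)) ^ p * ∑ x, f x ^ p := by
    intro π
    refine x_doob (fun i => xH m N π (N - i)) ?_ f hf (g π) ?_ ?_ ?_ hp (N + 1)
    · intro i i' hi z hz
      rw [xH_mem] at hz ⊢
      intro t ht
      exact hz t (by omega)
    · intro i x; exact xE_nonneg _ _ hf x
    · intro i x z hz; exact xE_inv _ _ _ _ hz
    · intro i b hb; exact xE_adj _ _ _ hb
  have hfac : (0:ℝ) < N.factorial := by positivity
  have hsum1 : ∑ _π : Equiv.Perm (Fin N), (N.factorial : ℝ)⁻¹ = 1 := by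
    simp [Fintype.card_perm, hfac.ne']
  refine ⟨fun x => ∑ π : Equiv.Perm (Fin N), (N.factorial : ℝ)⁻¹ * xMm (g π) (N + 1) x, ?_, ?_, ?_⟩
  · intro x
    exact Finset.sum_nonneg fun π _ => mul_nonneg (by positivity) (xMm_nonneg _ _ _)
  · intro j hj x
    rw [xB_eq hm hj, Finset.mul_sum]
    refine Finset.sum_le_sum fun π _ => ?_
    apply mul_le_mul_of_nonneg_left _ (by positivity)
    have := xMm_ge (g π) (N + 1) (N - j) (by omega) x
    simp only [g, Nat.sub_sub_self hj] at this
    exact this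
  · calc ∑ x, (∑ π : Equiv.Perm (Fin N), (N.factorial : ℝ)⁻¹ * xMm (g π) (N + 1) x) ^ p
        ≤ ∑ x, ∑ π : Equiv.Perm (Fin N), (N.factorial : ℝ)⁻¹ * xMm (g π) (N + 1) x ^ p := by
          refine Finset.sum_le_sum fun x _ => ?_
          exact Real.rpow_arith_mean_le_arith_mean_rpow _ _ _ (fun _ _ => by positivity) hsum1
            (fun π _ => xMm_nonneg _ _ _) hp.le
      _ = ∑ π : Equiv.Perm (Fin N), (N.factorial : ℝ)⁻¹ * ∑ x, xMm (g π) (N + 1) x ^ p := by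
          rw [Finset.sum_comm]
          simp only [Finset.mul_sum]
      _ ≤ ∑ π : Equiv.Perm (Fin N), (N.factorial : ℝ)⁻¹ * ((p / (p - 1)) ^ p * ∑ x, f x ^ p) := by
          refine Finset.sum_le_sum fun π _ => ?_
          exact mul_le_mul_of_nonneg_left (hd π) (by positivity)
      _ = _ := by rw [← Finset.sum_mul, hsum1, one_mul]

lemma xS_conv {m N : ℕ} (k : ℕ) (f : (Fin N → ZMod (m + 1)) → ℝ) (x : Fin N → ZMod (m + 1)) :
    convC (sigmaC m N (k : ℤ)) (fun y => (f y : ℂ)) x = (xS m N k f x : ℂ) := by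
  unfold convC xS
  push_cast
  refine Finset.sum_congr rfl fun y _ => ?_
  rw [x_sig]
  split_ifs <;> simp

lemma xS_nonneg {m N : ℕ} (k : ℕ) (f : (Fin N → ZMod (m + 1)) → ℝ) (hf : ∀ x, 0 ≤ f x) (x : Fin N → ZMod (m + 1)) :
    0 ≤ xS m N k f x := by
  unfold xS
  refine Finset.sum_nonneg fun y _ => mul_nonneg ?_ (hf _)
  split_ifs <;> positivity

lemma xS_norm {m N : ℕ} (k : ℕ) (f : (Fin N → ZMod (m + 1)) → ℂ) (x : Fin N → ZMod (m + 1)) :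
    ‖convC (sigmaC m N (k : ℤ)) f x‖ ≤ xS m N k (fun y => ‖f y‖) x := by
  unfold convC xS
  refine (norm_sum_le _ _).trans (le_of_eq ?_)
  refine Finset.sum_congr rfl fun y _ => ?_
  rw [x_sig, norm_mul]
  split_ifs <;> simp

lemma xS_jensen {m N : ℕ} (hm : 2 ≤ m) (k : ℕ) (f : (Fin N → ZMod (m + 1)) → ℝ) (hf : ∀ x, 0 ≤ f x)
    {t : ℝ} (ht : 1 ≤ t) (x : Fin N → ZMod (m + 1)) :
    xS m N k f x ^ t ≤ xS m N k (fun y => f y ^ t) x := by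
  by_cases hk : k ≤ N
  · unfold xS
    refine Real.rpow_arith_mean_le_arith_mean_rpow _ _ _ ?_ ?_ (fun _ _ => hf _) ht
    · intro y _; split_ifs <;> positivity
    · rw [← Finset.sum_filter, sum_const, x_sph_card, nsmul_eq_mul]
      apply mul_inv_cancel₀
      have : N.choose k * m ^ k ≠ 0 := by
        have := Nat.choose_pos hk
        have : 0 < m ^ k := pow_pos (by omega) _
        positivity
      exact_mod_cast this
  · have : ∀ g : (Fin N → ZMod (m + 1)) → ℝ, xS m N k g x = 0 := by
      intro g; unfold xS
      rw [Nat.choose_eq_zero_of_lt (by omega)]; simp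
    rw [this, this, Real.zero_rpow (by linarith)]

lemma xS_lp {m N : ℕ} (hm : 2 ≤ m) (k : ℕ) (f : (Fin N → ZMod (m + 1)) → ℝ) (hf : ∀ x, 0 ≤ f x)
    {t : ℝ} (ht : 1 ≤ t) : ∑ x, xS m N k f x ^ t ≤ ∑ x, f x ^ t := by
  refine (Finset.sum_le_sum fun x _ => xS_jensen hm k f hf ht x).trans ?_
  unfold xS
  rw [Finset.sum_comm]
  have : ∀ y : Fin N → ZMod (m + 1), ∑ x, (if hw y = k then ((N.choose k * m ^ k : ℕ) : ℝ)⁻¹ else 0) * f (x - y) ^ t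
      = (if hw y = k then ((N.choose k * m ^ k : ℕ) : ℝ)⁻¹ else 0) * ∑ x, f x ^ t := by
    intro y
    rw [← Finset.mul_sum]
    congr 1
    exact Equiv.sum_comp (Equiv.subRight y) (fun x => f x ^ t)
  simp only [this]
  rw [← Finset.sum_mul]
  have hs : ∑ y : Fin N → ZMod (m + 1), (if hw y = k then ((N.choose k * m ^ k : ℕ) : ℝ)⁻¹ else 0) ≤ 1 := by
    rw [← Finset.sum_filter, sum_const, x_sph_card, nsmul_eq_mul]
    exact mul_inv_le_one
  have h0 : 0 ≤ ∑ x, f x ^ t := Finset.sum_nonneg fun x _ => Real.rpow_nonneg (hf x) _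
  nlinarith

lemma x_point {m N M k : ℕ} (hm : 2 ≤ m) (hM : 1 ≤ M) (hk : 16 * (4 * M) ^ 2 + 2 ≤ k) (hN : k * (m + 1) ≤ m * N)
    (f W : (Fin N → ZMod (m + 1)) → ℝ) (hf : ∀ x, 0 ≤ f x) (hW : ∀ x, 0 ≤ W x)
    (hBW : ∀ j ≤ N, ∀ x, xB m N j f x ≤ W x) (x : Fin N → ZMod (m + 1)) :
    xS m N k f x ≤ (2 ^ M * (8 * M + 8)) * W x + ‖convC (xrho m N M (xw k) k) (fun y => (f y : ℂ)) x‖ := by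
  have hw4 := xw_M (4 * M) k (by omega)
  have hwpos := xw_pos k
  have hw2 : 2 ≤ xw k := by unfold xw; omega
  have hwk : 2 * M * xw k ≤ k := by nlinarith
  have hwk1 : (2 * M + 1) * xw k ≤ k := by nlinarith
  have hkN : k ≤ N := by nlinarith
  obtain ⟨a, b, hbN, hba, hbin⟩ := xbin_lower hm (by omega) (xw_sq k) hw2 hwk1 hN
  have h1 := x_main_conv hwk (fun y => (f y : ℂ)) x
  have hn : ∀ l, ‖convC (sigmaC m N (l : ℕ)) (fun y => (f y : ℂ)) x‖ = xS m N l f x := by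
    intro l
    rw [xS_conv, Complex.norm_real, Real.norm_of_nonneg (xS_nonneg _ _ hf _)]
  simp only [hn] at h1
  have h2 := norm_le_norm_add_norm_sub (convC (xrho m N M (xw k) k) (fun y => (f y : ℂ)) x)
    (convC (sigmaC m N (k : ℤ)) (fun y => (f y : ℂ)) x)
  rw [hn, norm_sub_rev] at h2
  have hle : ∑ l ∈ range (2 * M * xw k - xw k), xS m N (k - 2 * M * xw k + l) f x ≤ 2 * (((4 * M + 4) * xw k : ℕ) * W x) := by
    have s1 : ∑ l ∈ range (2 * M * xw k - xw k), xS m N (k - 2 * M * xw k + l) f x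
        ≤ ∑ l ∈ range (2 * M * xw k - xw k), 2 * ∑ j ∈ Ico a b,
          xbin m j (k - 2 * M * xw k + l) * xS m N (k - 2 * M * xw k + l) f x := by
      refine Finset.sum_le_sum fun l hl => ?_
      rw [mem_range] at hl
      have := hbin (k - 2 * M * xw k + l) (by omega) (by omega)
      have h0 := xS_nonneg (k - 2 * M * xw k + l) f hf x
      rw [← Finset.sum_mul]
      nlinarith
    refine s1.trans ?_
    rw [← Finset.mul_sum, Finset.sum_comm]
    apply mul_le_mul_of_nonneg_left _ (by norm_num)
    have s2 : ∀ j ∈ Ico a b, ∑ l ∈ range (2 * M * xw k - xw k),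
        xbin m j (k - 2 * M * xw k + l) * xS m N (k - 2 * M * xw k + l) f x ≤ W x := by
      intro j hj
      rw [mem_Ico] at hj
      refine le_trans ?_ (hBW j (by omega) x)
      unfold xB
      have e := Finset.sum_image (s := range (2 * M * xw k - xw k)) (g := fun l => k - 2 * M * xw k + l)
        (f := fun l => xbin m j l * xS m N l f x) (by intro u _ v _ h; simpa using h)
      rw [← e]
      refine Finset.sum_le_sum_of_subset_of_nonneg ?_ ?_
      · intro l hl
        simp only [mem_image, mem_range] at hl ⊢
        obtain ⟨u, hu, rfl⟩ := hl
        omega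
      · intro l _ _
        exact mul_nonneg (xbin_nonneg _ _ _) (xS_nonneg _ _ hf _)
    refine (Finset.sum_le_sum s2).trans ?_
    rw [sum_const, Nat.card_Ico, nsmul_eq_mul]
    apply mul_le_mul_of_nonneg_right _ (hW x)
    exact_mod_cast (by omega : b - a ≤ (4 * M + 4) * xw k)
  have hwR : (0:ℝ) < xw k := by exact_mod_cast hwpos
  have h3 : ((2:ℝ) ^ M - 1) / xw k * ∑ l ∈ range (2 * M * xw k - xw k), xS m N (k - 2 * M * xw k + l) f x
      ≤ 2 ^ M / xw k * (2 * (((4 * M + 4) * xw k : ℕ) * W x)) := by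
    apply mul_le_mul _ hle (Finset.sum_nonneg fun l _ => xS_nonneg _ _ hf _) (by positivity)
    gcongr
    linarith
  have h4 : (2:ℝ) ^ M / xw k * (2 * (((4 * M + 4) * xw k : ℕ) * W x)) = (2 ^ M * (8 * M + 8)) * W x := by
    push_cast
    field_simp
    ring
  linarith

lemma x_small_p {m : ℕ} (hm : 2 ≤ m) {p : ℝ} (hp : 1 < p) (hp2 : p < 2) :
    ∃ C : ℝ, 0 ≤ C ∧ ∀ N : ℕ, ∀ f : (Fin N → ZMod (m + 1)) → ℝ, (∀ x, 0 ≤ f x) →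
      ∃ V : (Fin N → ZMod (m + 1)) → ℝ, (∀ k x, k * (m + 1) ≤ m * N → xS m N k f x ^ p ≤ V x) ∧
        ∑ x, V x ≤ C * ∑ x, f x ^ p := by
  have hp1 : 0 < p - 1 := by linarith
  obtain ⟨M, hM0⟩ := exists_nat_ge (2 / (p - 1))
  have hM : 2 ≤ M * (p - 1) := by rwa [div_le_iff₀ hp1] at hM0
  have hM1 : 1 ≤ M := by
    rcases Nat.eq_zero_or_pos M with h | h
    · subst h; norm_num at hM
    · exact h
  obtain ⟨K, hK0, hK⟩ := x_rem hm hp hp2 hM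
  set K0 : ℕ := 16 * (4 * M) ^ 2 + 2 + m * M with hK0def
  set C1 : ℝ := 2 ^ M * (8 * M + 8) with hC1
  set Z : ℝ := ∑' k : ℕ, 1 / (k : ℝ) ^ 2 with hZ
  have hsum : Summable fun k : ℕ => 1 / (k : ℝ) ^ 2 := Real.summable_one_div_nat_pow.2 (by norm_num)
  have hZ0 : 0 ≤ Z := tsum_nonneg fun k => by positivity
  have hC10 : 0 ≤ C1 := by positivity
  have hpp : 0 ≤ (p / (p - 1)) ^ p := Real.rpow_nonneg (by positivity) _
  refine ⟨K0 + 2 ^ p * (C1 ^ p * (p / (p - 1)) ^ p + K * Z), by positivity, ?_⟩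
  intro N f hf
  obtain ⟨W, hW, hBW, hWp⟩ := xB_max hm hp f hf
  set I : Finset ℕ := (range (N + 1)).filter (fun k => K0 ≤ k ∧ k + M ≤ N) with hI
  let R : ℕ → (Fin N → ZMod (m + 1)) → ℝ := fun k x => ‖convC (xrho m N M (xw k) k) (fun y => (f y : ℂ)) x‖
  have hR : ∀ k x, 0 ≤ R k x ^ p := fun k x => Real.rpow_nonneg (norm_nonneg _) _
  refine ⟨fun x => ∑ k ∈ range K0, xS m N k f x ^ p + 2 ^ p * (C1 ^ p * W x ^ p + ∑ k ∈ I, R k x ^ p), ?_, ?_⟩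
  · intro k x hk
    have hn1 : 0 ≤ ∑ k ∈ range K0, xS m N k f x ^ p :=
      Finset.sum_nonneg fun k _ => Real.rpow_nonneg (xS_nonneg _ _ hf _) _
    have hn2 : 0 ≤ ∑ k ∈ I, R k x ^ p := Finset.sum_nonneg fun k _ => hR k x
    have hn3 : 0 ≤ C1 ^ p * W x ^ p := mul_nonneg (by positivity) (Real.rpow_nonneg (hW x) _)
    have h2p : (0:ℝ) < 2 ^ p := by positivity
    by_cases hkK : k < K0
    · have h := Finset.single_le_sum (f := fun k => xS m N k f x ^ p)
        (fun k _ => Real.rpow_nonneg (xS_nonneg _ _ hf _) _) (mem_range.2 hkK)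
      have : 0 ≤ (2:ℝ) ^ p * (C1 ^ p * W x ^ p + ∑ k ∈ I, R k x ^ p) := by positivity
      linarith
    · push Not at hkK
      have hmM : 1 ≤ m * M := Nat.mul_pos (by omega) hM1
      have hkM : k + M ≤ N := by
        have : m * (k + M) ≤ m * N := by
          have e1 : m * (k + M) = m * k + m * M := by ring
          have e2 : k * (m + 1) = m * k + k := by ring
          omega
        exact Nat.le_of_mul_le_mul_left this (by omega)
      have hkI : k ∈ I := by
        rw [hI, mem_filter, mem_range]
        exact ⟨by omega, hkK, hkM⟩
      have h1 := x_point hm hM1 (by omega) hk f W hf hW hBW x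
      have h2 : R k x ^ p ≤ ∑ k ∈ I, R k x ^ p :=
        Finset.single_le_sum (f := fun k => R k x ^ p) (fun k _ => hR k x) hkI
      have h3 : xS m N k f x ^ p ≤ 2 ^ p * (C1 ^ p * W x ^ p + R k x ^ p) := by
        have hu : 0 ≤ C1 * W x := mul_nonneg hC10 (hW x)
        have hv : 0 ≤ R k x := norm_nonneg _
        have h4 : xS m N k f x ≤ 2 * max (C1 * W x) (R k x) := by
          have := le_max_left (C1 * W x) (R k x)
          have := le_max_right (C1 * W x) (R k x)
          change xS m N k f x ≤ C1 * W x + R k x at h1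
          linarith
        calc xS m N k f x ^ p ≤ (2 * max (C1 * W x) (R k x)) ^ p :=
              Real.rpow_le_rpow (xS_nonneg _ _ hf _) h4 (by linarith)
          _ = 2 ^ p * (max (C1 * W x) (R k x)) ^ p := Real.mul_rpow (by norm_num) (le_max_of_le_left hu)
          _ ≤ _ := by
              apply mul_le_mul_of_nonneg_left _ h2p.le
              rw [← Real.mul_rpow hC10 (hW x)]
              have := Real.rpow_nonneg hu p
              have := hR k x
              rcases max_choice (C1 * W x) (R k x) with h | h <;> rw [h] <;> linarith
      have h5 : (2:ℝ) ^ p * (C1 ^ p * W x ^ p + R k x ^ p) ≤ 2 ^ p * (C1 ^ p * W x ^ p + ∑ k ∈ I, R k x ^ p) := by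
        gcongr
      linarith
  · have hF : 0 ≤ ∑ x, f x ^ p := Finset.sum_nonneg fun x _ => Real.rpow_nonneg (hf x) _
    rw [Finset.sum_add_distrib, ← Finset.mul_sum, Finset.sum_add_distrib, ← Finset.mul_sum, Finset.sum_comm,
      Finset.sum_comm (s := univ) (t := I)]
    have e1 : ∑ k ∈ range K0, ∑ x, xS m N k f x ^ p ≤ K0 * ∑ x, f x ^ p := by
      refine (Finset.sum_le_sum fun k _ => xS_lp hm k f hf hp.le).trans ?_
      simp
    have e2 : ∑ k ∈ I, ∑ x, R k x ^ p ≤ K * Z * ∑ x, f x ^ p := by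
      have : ∀ k ∈ I, ∑ x, R k x ^ p ≤ K * (1 / (k:ℝ) ^ 2) * ∑ x, f x ^ p := by
        intro k hk
        rw [hI, mem_filter] at hk
        have := hK N k (by omega) hk.2.2 (fun y => (f y : ℂ))
        simp only [Complex.norm_real, Real.norm_of_nonneg (hf _)] at this
        rw [mul_one_div]
        exact this
      refine (Finset.sum_le_sum this).trans ?_
      rw [← Finset.sum_mul, ← Finset.mul_sum]
      apply mul_le_mul_of_nonneg_right _ hF
      apply mul_le_mul_of_nonneg_left _ hK0
      exact hsum.sum_le_tsum _ (fun k _ => by positivity)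
    have e3 : C1 ^ p * ∑ x, W x ^ p ≤ C1 ^ p * ((p / (p - 1)) ^ p * ∑ x, f x ^ p) := by gcongr
    have e4 : (2:ℝ) ^ p * (C1 ^ p * ∑ x, W x ^ p + ∑ k ∈ I, ∑ x, R k x ^ p) ≤
        2 ^ p * (C1 ^ p * ((p / (p - 1)) ^ p * ∑ x, f x ^ p) + K * Z * ∑ x, f x ^ p) := by gcongr
    refine (add_le_add e1 e4).trans (le_of_eq ?_)
    ring

theorem statement11 (m : ℕ) (hm : 2 ≤ m) (p : ℝ) (hp : 1 < p) :
    ∃ C : ℝ, ∀ N : ℕ, 1 ≤ N → ∀ f : (Fin N → ZMod (m + 1)) → ℂ,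
      (∑ x, localMax m N f x ^ p) ^ (1 / p) ≤ C * (∑ x, ‖f x‖ ^ p) ^ (1 / p) := by
  set q : ℝ := min p (3 / 2) with hq
  have hq1 : 1 < q := lt_min hp (by norm_num)
  have hq2 : q < 2 := lt_of_le_of_lt (min_le_right _ _) (by norm_num)
  have hqp : q ≤ p := min_le_left _ _
  have hq0 : 0 < q := by linarith
  set t : ℝ := p / q with ht
  have ht1 : 1 ≤ t := by rw [ht, le_div_iff₀ hq0]; linarith
  have htq : t * q = p := by rw [ht]; field_simp
  obtain ⟨C, hC0, hC⟩ := x_small_p hm hq1 hq2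
  refine ⟨C ^ (1 / p), ?_⟩
  intro N _ f
  obtain ⟨V, hV, hVs⟩ := hC N (fun x => ‖f x‖ ^ t) (fun x => by positivity)
  have hlm : ∀ x, 0 ≤ localMax m N f x ∧ localMax m N f x ^ p ≤ V x := by
    intro x
    unfold localMax
    obtain ⟨k, hk, hkeq⟩ := Finset.exists_mem_eq_sup' (s := range ((m * N) / (m + 1) + 1)) Finset.nonempty_range_add_one
      (fun k : ℕ => ‖convC (sigmaC m N (k : ℤ)) f x‖)
    rw [hkeq]
    refine ⟨norm_nonneg _, ?_⟩
    have hkN : k * (m + 1) ≤ m * N := by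
      rw [mem_range] at hk
      exact (Nat.le_div_iff_mul_le (by omega)).1 (by omega)
    refine le_trans ?_ (hV k x hkN)
    have h1 := xS_norm k f x
    have h2 := xS_jensen hm k (fun y => ‖f y‖) (fun _ => norm_nonneg _) ht1 x
    have h0 := xS_nonneg (m := m) (N := N) k (fun y => ‖f y‖) (fun _ => norm_nonneg _) x
    calc ‖convC (sigmaC m N (k : ℤ)) f x‖ ^ p ≤ (xS m N k (fun y => ‖f y‖) x) ^ p :=
          Real.rpow_le_rpow (norm_nonneg _) h1 (by linarith)
      _ = ((xS m N k (fun y => ‖f y‖) x) ^ t) ^ q := by rw [← Real.rpow_mul h0, htq]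
      _ ≤ _ := Real.rpow_le_rpow (Real.rpow_nonneg h0 _) h2 hq0.le
  have hfin : ∑ x, localMax m N f x ^ p ≤ C * ∑ x, ‖f x‖ ^ p := by
    refine (Finset.sum_le_sum fun x _ => (hlm x).2).trans (hVs.trans (le_of_eq ?_))
    congr 1
    refine Finset.sum_congr rfl fun x _ => ?_
    rw [← Real.rpow_mul (norm_nonneg _), htq]
  have hF : 0 ≤ ∑ x, ‖f x‖ ^ p := by positivity
  rw [← Real.mul_rpow hC0 hF]
  apply Real.rpow_le_rpow (Finset.sum_nonneg fun x _ => Real.rpow_nonneg (hlm x).1 _) hfin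
  positivity
end
end
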